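/- arXiv:2207.09146 — 6 statements merged into one kernel-verified Lean document; each statement's English description precedes it below -/
import Mathlib

section
/- Let c, α > 0 be constants with α ≤ c/(m+1), let T be an α-coherent tournament on n vertices, and let A, B₁,...,B_m be m+1 pairwise disjoint vertex subsets of T with |A| ≥ cn and |B_i| ≥ cn for i = 1,...,m. Then there exist vertices a ∈ A and b_i ∈ B_i for i = 1,...,m such that a is adjacent to every vertex of {b₁,...,b_m} (i.e. (a,b_i) is an arc for all i). -/
/-!
For each `i`, the vertices of `A` with no out-neighbour in `B i` are dominated by all of `B i`,
so they form a pure pair with `B i`. Since `|B i| ≥ cn ≥ αn`, coherence leaves fewer than `αn`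
such vertices. Altogether at most `mαn < (m+1)αn ≤ cn ≤ |A|` vertices of `A` fail for some `i`,
so some vertex of `A` has an out-neighbour in every `B i`.
-/

/-- A tournament on `n` vertices: for every two distinct vertices `u, v` exactly one of
`(u,v)`, `(v,u)` is an arc, and there are no loops. -/
structure Tournament (n : ℕ) where
  arc : Fin n → Fin n → Bool
  irrefl : ∀ v, arc v v = false
  total : ∀ u v : Fin n, u ≠ v → arc u v = !arc v u

namespace Tournament

variable {n m : ℕ}

/-- A pure pair in `T`: disjoint vertex subsets `A, B` with every vertex of `A`
having an arc to every vertex of `B`. -/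
def IsPurePair (T : Tournament n) (A B : Finset (Fin n)) : Prop :=
  Disjoint A B ∧ ∀ a ∈ A, ∀ b ∈ B, T.arc a b = true

/-- `T` is `α`-coherent: every pure pair of `T` has order (the minimum of the two
cardinalities) strictly less than `α·|V(T)|`, i.e. `𝒫(T) < α·|V(T)|`. -/
def Coherent (T : Tournament n) (α : ℝ) : Prop :=
  ∀ A B : Finset (Fin n), T.IsPurePair A B → ((min A.card B.card : ℕ) : ℝ) < α * n

end Tournament

/-- Lemma 3.1 (first statement): in an `α`-coherent tournament with `α ≤ c/(m+1)` and
disjoint sets `A, B 0, ..., B (m-1)` of size at least `cn`, there are `a ∈ A` and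
`b i ∈ B i` with `a` adjacent to every `b i`. -/
theorem coherent_out_dominating (c α : ℝ) (m : ℕ) (hc : 0 < c) (hα : 0 < α)
    (hαc : α ≤ c / ((m : ℝ) + 1)) (n : ℕ) (T : Tournament n) (hcoh : T.Coherent α)
    (A : Finset (Fin n)) (B : Fin m → Finset (Fin n))
    (hAB : ∀ i, Disjoint A (B i)) (hBB : ∀ i j : Fin m, i ≠ j → Disjoint (B i) (B j))
    (hA : c * n ≤ (A.card : ℝ)) (hB : ∀ i, c * n ≤ ((B i).card : ℝ)) :
    ∃ a ∈ A, ∃ b : Fin m → Fin n, (∀ i, b i ∈ B i) ∧ ∀ i, T.arc a (b i) = true := by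
  classical
  have hm : (0 : ℝ) < (m : ℝ) + 1 := by positivity
  have hmc : α * ((m : ℝ) + 1) ≤ c := (le_div_iff₀ hm).mp hαc
  -- The empty pure pair has order `0`, so coherence forces `n > 0`.
  have hαn : 0 < α * n := by
    simpa using hcoh ∅ ∅ ⟨Finset.disjoint_empty_left _, by simp⟩
  have hn : (0 : ℝ) < n := pos_of_mul_pos_right hαn hα.le
  have hαcn : α * n * ((m : ℝ) + 1) ≤ c * n := by nlinarith
  have hle : α * n ≤ c * n := by
    have : 0 ≤ α * n * m := by positivity
    linarith
  -- `bad i` is the set of vertices of `A` with no out-neighbour in `B i`.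
  let bad : Fin m → Finset (Fin n) := fun i => A.filter fun a => ∀ b ∈ B i, T.arc a b = false
  have hbad : ∀ i, ((bad i).card : ℝ) ≤ α * n := by
    intro i
    have hpure : T.IsPurePair (B i) (bad i) := by
      refine ⟨((hAB i).mono_left (Finset.filter_subset _ _)).symm, fun b hb a ha => ?_⟩
      obtain ⟨haA, hab⟩ := Finset.mem_filter.mp ha
      have hne : b ≠ a := fun h => Finset.disjoint_left.mp (hAB i) haA (h ▸ hb)
      rw [T.total b a hne, hab b hb]
      rfl
    have h := hcoh _ _ hpure
    rw [Nat.cast_min, min_lt_iff] at h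
    rcases h with h | h
    · linarith [hB i]
    · exact h.le
  have hex : ∃ a ∈ A, ∀ i, a ∉ bad i := by
    by_contra! hcon
    have hsub : A ⊆ Finset.univ.biUnion bad := fun a ha => by
      simpa using hcon a ha
    have hcard : (A.card : ℝ) ≤ ∑ i, ((bad i).card : ℝ) := by
      exact_mod_cast (Finset.card_le_card hsub).trans Finset.card_biUnion_le
    have hsum : ∑ i, ((bad i).card : ℝ) ≤ m * (α * n) := by
      simpa using Finset.sum_le_sum fun i (_ : i ∈ Finset.univ) => hbad i
    linarith
  obtain ⟨a, haA, ha⟩ := hex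
  have hout : ∀ i, ∃ b ∈ B i, T.arc a b = true := by
    intro i
    by_contra! hcon
    exact ha i (Finset.mem_filter.mpr ⟨haA, fun b hb => by simpa using hcon b hb⟩)
  choose b hb hab using hout
  exact ⟨a, haA, b, hb, hab⟩
end

section
/- Let c, α > 0 be constants with α ≤ c/(m+1), let T be an α-coherent tournament on n vertices, and let A, B₁,...,B_m be m+1 pairwise disjoint vertex subsets of T with |A| ≥ cn and |B_i| ≥ cn for i = 1,...,m. Then there exist vertices r ∈ A and u_i ∈ B_i for i = 1,...,m such that r is adjacent from every vertex of {u₁,...,u_m} (i.e. (u_i,r) is an arc for all i). -/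
/-- Lemma 3.1 (second statement): in an `α`-coherent tournament with `α ≤ c/(m+1)` and
disjoint sets `A, B 0, ..., B (m-1)` of size at least `cn`, there are `r ∈ A` and
`u i ∈ B i` with `r` adjacent from every `u i`. -/
theorem coherent_in_dominated (c α : ℝ) (m : ℕ) (hc : 0 < c) (hα : 0 < α)
    (hαc : α ≤ c / ((m : ℝ) + 1)) (n : ℕ) (T : Tournament n) (hcoh : T.Coherent α)
    (A : Finset (Fin n)) (B : Fin m → Finset (Fin n))
    (hAB : ∀ i, Disjoint A (B i)) (hBB : ∀ i j : Fin m, i ≠ j → Disjoint (B i) (B j))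
    (hA : c * n ≤ (A.card : ℝ)) (hB : ∀ i, c * n ≤ ((B i).card : ℝ)) :
    ∃ r ∈ A, ∃ u : Fin m → Fin n, (∀ i, u i ∈ B i) ∧ ∀ i, T.arc (u i) r = true := by
  -- The empty pure pair shows `0 < α * n`, hence `n ≠ 0`.
  have hpos : 0 < α * n := by
    simpa using hcoh ∅ ∅ ⟨Finset.disjoint_empty_left _, by simp⟩
  have hcn : ((m : ℝ) + 1) * (α * n) ≤ c * n := by
    have h : α * ((m : ℝ) + 1) ≤ c := (le_div_iff₀ (by positivity)).1 hαc
    nlinarith [mul_le_mul_of_nonneg_right h (Nat.cast_nonneg (α := ℝ) n)]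
  have hαn : α * n ≤ c * n := by
    have : 0 ≤ (m : ℝ) * (α * n) := by positivity
    linarith
  let Z : Fin m → Finset (Fin n) := fun i => A.filter fun a => ∀ u ∈ B i, T.arc u a = false
  have hZ : ∀ i, ((Z i).card : ℝ) ≤ α * n := by
    intro i
    have hpure : T.IsPurePair (Z i) (B i) := by
      refine ⟨(hAB i).mono_left (Finset.filter_subset _ _), fun a ha b hb => ?_⟩
      obtain ⟨haA, hab⟩ := Finset.mem_filter.1 ha
      rw [T.total a b (Finset.disjoint_left.1 (hAB i) haA |>.imp fun h => h ▸ hb), hab b hb]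
      rfl
    have h := hcoh _ _ hpure
    rw [Nat.cast_min, min_lt_iff] at h
    rcases h with h | h
    · exact h.le
    · linarith [hB i]
  by_contra hno
  have hcover : A ⊆ Finset.univ.biUnion Z := by
    intro r hr
    by_contra hrZ
    have hex : ∀ i, ∃ u ∈ B i, T.arc u r = true := by
      intro i
      by_contra! hi
      exact hrZ (Finset.mem_biUnion.2 ⟨i, Finset.mem_univ i, Finset.mem_filter.2
        ⟨hr, fun u hu => Bool.eq_false_iff.2 (hi u hu)⟩⟩)
    choose u hu hur using hex
    exact hno ⟨r, hr, u, hu, hur⟩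
  have hcard : (A.card : ℝ) ≤ m * (α * n) := calc
    (A.card : ℝ) ≤ ∑ i, ((Z i).card : ℝ) := by
      exact_mod_cast (Finset.card_le_card hcover).trans Finset.card_biUnion_le
    _ ≤ ∑ _i : Fin m, α * n := Finset.sum_le_sum fun i _ => hZ i
    _ = m * (α * n) := by simp
  linarith
end

section
/- Let c, α > 0 be constants with α ≤ c/(m+1), let T be an α-coherent tournament on n vertices, let A, B₁,...,B_m be m+1 pairwise disjoint vertex subsets of T with |A| ≥ cn and |B_i| ≥ cn for i = 1,...,m, and let t ∈ {0,1,...,m}. Then there exist vertices r ∈ A and s_i ∈ B_i for i = 1,...,m such that (s_i, r) is an arc for all 1 ≤ i ≤ t and (r, s_i) is an arc for all t+1 ≤ i ≤ m. -/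
namespace Tournament

theorem Coherent.card_lt_left {n : ℕ} {T : Tournament n} {α : ℝ} (h : T.Coherent α)
    {X Y : Finset (Fin n)} (hXY : T.IsPurePair X Y) (hY : α * n ≤ (Y.card : ℝ)) :
    (X.card : ℝ) < α * n := by
  have := h X Y hXY
  rw [Nat.cast_min, min_lt_iff] at this
  exact this.resolve_right (not_lt.mpr hY)

theorem Coherent.card_lt_right {n : ℕ} {T : Tournament n} {α : ℝ} (h : T.Coherent α)
    {X Y : Finset (Fin n)} (hXY : T.IsPurePair X Y) (hX : α * n ≤ (X.card : ℝ)) :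
    (Y.card : ℝ) < α * n := by
  have := h X Y hXY
  rw [Nat.cast_min, min_lt_iff] at this
  exact this.resolve_left (not_lt.mpr hX)

end Tournament

/-- Lemma 3.1 (third statement): in an `α`-coherent tournament with `α ≤ c/(m+1)` and
disjoint sets `A, B 0, ..., B (m-1)` of size at least `cn`, for any `t ≤ m` there are
`r ∈ A` and `s i ∈ B i` with `s i → r` for the first `t` indices and `r → s i` for the
remaining ones. -/
theorem coherent_mixed (c α : ℝ) (m : ℕ) (hc : 0 < c) (hα : 0 < α)
    (hαc : α ≤ c / ((m : ℝ) + 1)) (n : ℕ) (T : Tournament n) (hcoh : T.Coherent α)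
    (A : Finset (Fin n)) (B : Fin m → Finset (Fin n))
    (hAB : ∀ i, Disjoint A (B i)) (hBB : ∀ i j : Fin m, i ≠ j → Disjoint (B i) (B j))
    (hA : c * n ≤ (A.card : ℝ)) (hB : ∀ i, c * n ≤ ((B i).card : ℝ)) (t : ℕ) (ht : t ≤ m) :
    ∃ r ∈ A, ∃ s : Fin m → Fin n, (∀ i, s i ∈ B i) ∧
      (∀ i : Fin m, (i : ℕ) < t → T.arc (s i) r = true) ∧
      (∀ i : Fin m, t ≤ (i : ℕ) → T.arc r (s i) = true) := by
  classical
  -- Coherence applied to the empty pair shows in particular that `n ≠ 0`.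
  have hpos : 0 < α * n := by
    simpa using hcoh ∅ ∅ ⟨Finset.disjoint_empty_left _, by simp⟩
  have hcn : ((m : ℝ) + 1) * (α * n) ≤ c * n := by
    rw [le_div_iff₀ (by positivity)] at hαc
    calc ((m : ℝ) + 1) * (α * n) = α * (m + 1) * n := by ring
      _ ≤ c * n := by gcongr
  have hαB : ∀ i, α * n ≤ ((B i).card : ℝ) := fun i => by
    have : 0 ≤ (m : ℝ) * (α * n) := by positivity
    linarith [hB i]
  let good : Fin m → Fin n → Fin n → Prop := fun i r s =>
    ((i : ℕ) < t → T.arc s r = true) ∧ (t ≤ (i : ℕ) → T.arc r s = true)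
  let bad : Fin m → Finset (Fin n) := fun i => A.filter fun r => ∀ s ∈ B i, ¬ good i r s
  have hbad : ∀ i, ((bad i).card : ℝ) ≤ α * n := by
    intro i
    have hdisj : Disjoint (bad i) (B i) := (hAB i).mono_left (Finset.filter_subset _ _)
    have hne : ∀ r ∈ bad i, ∀ s ∈ B i, r ≠ s := fun r hr s hs =>
      Finset.disjoint_iff_ne.mp hdisj r hr s hs
    rcases lt_or_ge (i : ℕ) t with hi | hi
    · refine (hcoh.card_lt_left ⟨hdisj, fun r hr s hs => ?_⟩ (hαB i)).le
      have h := (Finset.mem_filter.mp hr).2 s hs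
      rw [T.total r s (hne r hr s hs)]
      simpa [good, hi, not_le.mpr hi] using h
    · refine (hcoh.card_lt_right ⟨hdisj.symm, fun s hs r hr => ?_⟩ (hαB i)).le
      have h := (Finset.mem_filter.mp hr).2 s hs
      rw [T.total s r (hne r hr s hs).symm]
      simpa [good, hi, not_lt.mpr hi] using h
  have hunion : ((Finset.univ.biUnion bad).card : ℝ) ≤ m * (α * n) := by
    calc ((Finset.univ.biUnion bad).card : ℝ) ≤ ∑ i, ((bad i).card : ℝ) := by
          exact_mod_cast Finset.card_biUnion_le
      _ ≤ ∑ _i : Fin m, α * n := Finset.sum_le_sum fun i _ => hbad i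
      _ = m * (α * n) := by simp
  have hlt : (Finset.univ.biUnion bad).card < A.card := by
    have : ((Finset.univ.biUnion bad).card : ℝ) < A.card := by linarith
    exact_mod_cast this
  obtain ⟨r, hrA, hr⟩ := Finset.exists_mem_notMem_of_card_lt_card hlt
  have hgood : ∀ i, ∃ s ∈ B i, good i r s := by
    intro i
    by_contra! h
    exact hr (Finset.mem_biUnion.mpr ⟨i, Finset.mem_univ i, Finset.mem_filter.mpr ⟨hrA, h⟩⟩)
  choose s hs hsg using hgood
  exact ⟨r, hrA, s, hs, fun i => (hsg i).1, fun i => (hsg i).2⟩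
end

section
/- Every tournament which has the strong EH-property also has the EH-property; that is, if H is a tournament for which there exists c > 0 such that every H-free tournament T with more than one vertex has a pure pair of order at least c·|V(T)|, then there exists ε > 0 such that every H-free tournament on n ≥ 1 vertices contains a transitive subtournament on at least n^ε vertices. -/
namespace Tournament

variable {n m : ℕ}

/-- `T` contains `S`: some subset of the vertices of `T` induces a copy of `S`. -/
def Contains (T : Tournament n) (S : Tournament m) : Prop :=
  ∃ f : Fin m ↪ Fin n, ∀ u v : Fin m, S.arc u v = true → T.arc (f u) (f v) = true

/-- `H` has the strong EH-property: there is `c > 0` such that every `H`-free tournament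
`T` with more than one vertex has a pure pair of order at least `c·|V(T)|`. -/
def StrongEH (H : Tournament m) : Prop :=
  ∃ c : ℝ, 0 < c ∧ ∀ (n : ℕ) (T : Tournament n), ¬ T.Contains H → 1 < n →
    ∃ A B : Finset (Fin n), T.IsPurePair A B ∧ c * n ≤ ((min A.card B.card : ℕ) : ℝ)

/-- The subtournament of `T` induced by `X` is transitive (equivalently, for a
tournament, it contains no directed cycle). -/
def IsTransitiveOn (T : Tournament n) (X : Finset (Fin n)) : Prop :=
  ∀ u ∈ X, ∀ v ∈ X, ∀ w ∈ X,
    T.arc u v = true → T.arc v w = true → T.arc u w = true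

/-- `H` has the EH-property: there is `ε > 0` such that every `H`-free tournament on
`n ≥ 1` vertices contains a transitive subtournament on at least `n ^ ε` vertices. -/
def EH (H : Tournament m) : Prop :=
  ∃ ε : ℝ, 0 < ε ∧ ∀ (n : ℕ) (T : Tournament n), ¬ T.Contains H → 1 ≤ n →
    ∃ X : Finset (Fin n), T.IsTransitiveOn X ∧ (n : ℝ) ^ ε ≤ (X.card : ℝ)

end Tournament

namespace Tournament

variable {n m k : ℕ}

theorem arc_asymm (T : Tournament n) {u v : Fin n} (h : T.arc u v = true) :
    T.arc v u ≠ true := by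
  intro h'
  by_cases huv : u = v
  · subst huv
    simp [T.irrefl] at h
  · have := T.total u v huv
    simp [h, h'] at this

/-- The tournament on `k` vertices pulled back from `T` along an embedding, i.e. the subtournament
of `T` induced by the range of `f`. -/
def induce (T : Tournament n) (f : Fin k ↪ Fin n) : Tournament k where
  arc u v := T.arc (f u) (f v)
  irrefl v := T.irrefl (f v)
  total u v huv := T.total (f u) (f v) (f.injective.ne huv)

theorem not_contains_induce {T : Tournament n} {H : Tournament m} (hT : ¬ T.Contains H)
    (f : Fin k ↪ Fin n) : ¬ (T.induce f).Contains H := by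
  rintro ⟨g, hg⟩
  exact hT ⟨g.trans f, fun u v huv => hg u v huv⟩

theorem isTransitiveOn_map {T : Tournament n} (f : Fin k ↪ Fin n) {X : Finset (Fin k)}
    (hX : (T.induce f).IsTransitiveOn X) : T.IsTransitiveOn (X.map f) := by
  intro u hu v hv w hw huv hvw
  obtain ⟨u, huX, rfl⟩ := Finset.mem_map.1 hu
  obtain ⟨v, hvX, rfl⟩ := Finset.mem_map.1 hv
  obtain ⟨w, hwX, rfl⟩ := Finset.mem_map.1 hw
  exact hX u huX v hvX w hwX huv hvw

theorem isTransitiveOn_union {T : Tournament n} {A B : Finset (Fin n)}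
    (hAB : ∀ a ∈ A, ∀ b ∈ B, T.arc a b = true)
    (hA : T.IsTransitiveOn A) (hB : T.IsTransitiveOn B) : T.IsTransitiveOn (A ∪ B) := by
  intro u hu v hv w hw huv hvw
  -- No arc goes from `B` to `A`, so along the path `u, v, w` the set `A` is left at most once.
  rcases Finset.mem_union.1 hu with hu | hu <;> rcases Finset.mem_union.1 hw with hw | hw
  · rcases Finset.mem_union.1 hv with hv | hv
    · exact hA u hu v hv w hw huv hvw
    · exact absurd hvw (T.arc_asymm (hAB w hw v hv))
  · exact hAB u hu w hw
  · rcases Finset.mem_union.1 hv with hv | hv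
    · exact absurd huv (T.arc_asymm (hAB v hv u hu))
    · exact absurd hvw (T.arc_asymm (hAB w hw v hv))
  · rcases Finset.mem_union.1 hv with hv | hv
    · exact absurd huv (T.arc_asymm (hAB v hv u hu))
    · exact hB u hu v hv w hw huv hvw

/-- A bound for the induced subtournament on `A` (as a tournament on `Fin A.card`) gives a
transitive set of `T` inside `A`. -/
theorem exists_transitive_subset {T : Tournament n} {H : Tournament m} {ε : ℝ}
    (hT : ¬ T.Contains H) (A : Finset (Fin n))
    (ih : ∀ S : Tournament A.card, ¬ S.Contains H →
      ∃ X : Finset (Fin A.card), S.IsTransitiveOn X ∧ (A.card : ℝ) ^ ε ≤ (X.card : ℝ)) :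
    ∃ X ⊆ A, T.IsTransitiveOn X ∧ (A.card : ℝ) ^ ε ≤ (X.card : ℝ) := by
  let f : Fin A.card ↪ Fin n := (A.orderEmbOfFin rfl).toEmbedding
  obtain ⟨X, hX, hcard⟩ := ih (T.induce f) (not_contains_induce hT f)
  refine ⟨X.map f, ?_, isTransitiveOn_map f hX, by rwa [Finset.card_map]⟩
  intro x hx
  obtain ⟨y, -, rfl⟩ := Finset.mem_map.1 hx
  exact A.orderEmbOfFin_mem rfl y

end Tournament

/-- Every tournament with the strong EH-property also has the EH-property. -/
theorem strongEH_implies_EH {m : ℕ} (H : Tournament m) (h : H.StrongEH) : H.EH := by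
  obtain ⟨c₀, hc₀, hpair⟩ := h
  obtain ⟨c, hc, hcc₀, hc2⟩ : ∃ c : ℝ, 0 < c ∧ c ≤ c₀ ∧ c ≤ 1 / 2 :=
    ⟨min c₀ (1 / 2), lt_min hc₀ (by norm_num), min_le_left _ _, min_le_right _ _⟩
  have hc1 : c < 1 := by linarith
  obtain ⟨ε, hε, hcε⟩ : ∃ ε : ℝ, 0 < ε ∧ c ^ ε = 1 / 2 :=
    ⟨Real.logb c (1 / 2),
      Real.logb_pos_of_base_lt_one hc hc1 (by norm_num) (by norm_num),
      Real.rpow_logb hc hc1.ne (by norm_num)⟩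
  refine ⟨ε, hε, fun n => ?_⟩
  induction n using Nat.strong_induction_on with
  | _ n ih =>
  intro T hT hn
  obtain rfl | hn := hn.eq_or_lt
  · refine ⟨Finset.univ, ?_, by simp⟩
    intro u _ v _ w _ huv _
    rw [Subsingleton.elim v u, T.irrefl] at huv
    simp at huv
  obtain ⟨A, B, ⟨hdisj, hAB⟩, hmin⟩ := hpair n T hT hn
  have hn0 : (0 : ℝ) < n := by exact_mod_cast (by omega : 0 < n)
  have hcn : c * n ≤ ((min A.card B.card : ℕ) : ℝ) :=
    (mul_le_mul_of_nonneg_right hcc₀ hn0.le).trans hmin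
  have hpos : 0 < min A.card B.card := by
    exact_mod_cast (mul_pos hc hn0).trans_le hcn
  have hA0 : 0 < A.card := hpos.trans_le (min_le_left _ _)
  have hB0 : 0 < B.card := hpos.trans_le (min_le_right _ _)
  have hsum : A.card + B.card ≤ n := by
    rw [← Finset.card_union_of_disjoint hdisj]
    simpa using Finset.card_le_univ (A ∪ B)
  obtain ⟨X, hXA, hX, hXcard⟩ := Tournament.exists_transitive_subset hT A
    (fun S hS => ih A.card (by omega) S hS hA0)
  obtain ⟨Y, hYB, hY, hYcard⟩ := Tournament.exists_transitive_subset hT B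
    (fun S hS => ih B.card (by omega) S hS hB0)
  refine ⟨X ∪ Y, Tournament.isTransitiveOn_union (fun a ha b hb => hAB a (hXA ha) b (hYB hb)) hX hY, ?_⟩
  rw [Finset.card_union_of_disjoint (Finset.disjoint_of_subset_left hXA
    (Finset.disjoint_of_subset_right hYB hdisj))]
  have hpow : (c * n) ^ ε = (n : ℝ) ^ ε / 2 := by
    rw [Real.mul_rpow hc.le hn0.le, hcε]
    ring
  have hA : (c * n) ^ ε ≤ (A.card : ℝ) ^ ε :=
    Real.rpow_le_rpow (by positivity)
      (hcn.trans (by exact_mod_cast min_le_left _ _)) hε.le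
  have hB : (c * n) ^ ε ≤ (B.card : ℝ) ^ ε :=
    Real.rpow_le_rpow (by positivity)
      (hcn.trans (by exact_mod_cast min_le_right _ _)) hε.le
  push_cast
  linarith
end

section
/- If a tournament H has the strong EH-property, then there is an ordering θ of the vertices of H for which the backward arc digraph B(H,θ) is a forest, i.e. the underlying undirected graph of B(H,θ) contains no cycle. -/
namespace Tournament

variable {n m : ℕ}

/-- The tournament obtained by relabelling the vertices of `T` along the ordering
`θ` (position `i` holds vertex `θ i`); considering `T` under the ordering `θ` is the
same as considering `T.relabel θ` under the natural ordering of `Fin n`. -/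
def relabel (T : Tournament n) (θ : Fin n ≃ Fin n) : Tournament n where
  arc a b := T.arc (θ a) (θ b)
  irrefl v := T.irrefl (θ v)
  total u v h := T.total (θ u) (θ v) fun e => h (θ.injective e)

/-- `Back T u v`: `(u,v)` is a backward arc of `T` under the natural ordering of
`Fin n`, i.e. an arc pointing from a later position to an earlier one. -/
def Back (T : Tournament n) (u v : Fin n) : Prop :=
  v < u ∧ T.arc u v = true

end Tournament

namespace Tournament

open Finset

/-! ### Counting functions -/

section Counting

variable {I V : Type*} [Fintype I] [DecidableEq I] [Fintype V] [DecidableEq V]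

/-- The probability that a uniform random function `ω` satisfies `ω a ∈ F a` for all `a ∈ S` is at
most `(b / |V|) ^ |S|` if every `F a` has at most `b` elements. -/
lemma card_constrained_le (S : Finset I) (F : I → Finset V) (b : ℕ)
    (hF : ∀ a ∈ S, (F a).card ≤ b) :
    (univ.filter fun ω : I → V => ∀ a ∈ S, ω a ∈ F a).card * Fintype.card V ^ S.card
      ≤ b ^ S.card * Fintype.card V ^ Fintype.card I := by
  have h1 : (univ.filter fun ω : I → V => ∀ a ∈ S, ω a ∈ F a)
      = Fintype.piFinset (fun a => if a ∈ S then F a else univ) := by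
    ext ω
    simp only [mem_filter, mem_univ, true_and, Fintype.mem_piFinset]
    refine forall_congr' fun a => ?_
    by_cases h : a ∈ S <;> simp [h]
  rw [h1, Fintype.card_piFinset, ← prod_mul_prod_compl S]
  have h2 : ∏ a ∈ S, (if a ∈ S then F a else univ).card ≤ b ^ S.card := by
    refine prod_le_pow_card _ _ _ fun a ha => ?_
    simpa [ha] using hF a ha
  have h3 : ∏ a ∈ Sᶜ, (if a ∈ S then F a else univ).card = Fintype.card V ^ Sᶜ.card := by
    rw [prod_congr rfl (g := fun _ => Fintype.card V)]
    · simp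
    · intro a ha
      rw [mem_compl] at ha
      simp [ha, card_univ]
  rw [h3, mul_assoc, ← pow_add, card_compl, Nat.sub_add_cancel (card_le_univ S)]
  exact Nat.mul_le_mul_right _ h2

/-- A random function takes `k` prescribed values at `k` distinct points with probability at most
`|V| ^ (-k)`. -/
lemma card_prescribed_le {k : ℕ} (c : Fin k → I) (hc : Function.Injective c) (t : Fin k → V) :
    (univ.filter fun ω : I → V => ∀ j, ω (c j) = t j).card * Fintype.card V ^ k
      ≤ Fintype.card V ^ Fintype.card I := by
  have := card_constrained_le (univ.image c) (fun a => univ.filter fun v => ∀ j, c j = a → t j = v)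
    1 (by
      intro a ha
      obtain ⟨j, -, rfl⟩ := mem_image.1 ha
      refine card_le_one.2 fun u hu v hv => ?_
      simp only [mem_filter, mem_univ, true_and] at hu hv
      rw [← hu j rfl, ← hv j rfl])
  rw [card_image_of_injective _ hc, one_pow, one_mul, card_univ, Fintype.card_fin] at this
  refine le_trans (Nat.mul_le_mul_right _ (card_le_card ?_)) this
  intro ω
  simp only [mem_filter, mem_univ, true_and, mem_image, forall_exists_index]
  rintro h a j rfl j' hj'
  rw [← h j', hj']

end Counting

/-! ### Short cycles of the random graph -/

section Cycles

variable {d N : ℕ}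

/-- A potential cycle of length `r + 3`: its vertices `x`, and for each `j` the index of the map
creating the edge `x j, x (j + 1)` together with the direction in which that map is applied. -/
abbrev Pattern (d N r : ℕ) : Type :=
  (Fin (r + 3) → Fin N) × (Fin (r + 3) → Fin d) × (Fin (r + 3) → Bool)

/-- The argument of `ω` that creates the `j`-th edge of a pattern. -/
def Pattern.source {r : ℕ} (p : Pattern d N r) (j : Fin (r + 3)) : Fin d × Fin N :=
  (p.2.1 j, if p.2.2 j then p.1 j else p.1 (j + 1))

/-- The value of `ω` that creates the `j`-th edge of a pattern. -/
def Pattern.target {r : ℕ} (p : Pattern d N r) (j : Fin (r + 3)) : Fin N :=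
  if p.2.2 j then p.1 (j + 1) else p.1 j

/-- The pattern is a cycle of the graph defined by `ω`. -/
def Pattern.Occurs {r : ℕ} (p : Pattern d N r) (ω : Fin d × Fin N → Fin N) : Prop :=
  Function.Injective p.1 ∧ ∀ j, ω (p.source j) = p.target j

/-- If a pattern occurs at all, its edges are created by distinct arguments of `ω`: a common
argument forces a common value, hence a common edge, and a cycle of length at least 3 has no
repeated edges. -/
lemma Pattern.Occurs.source_injective {r : ℕ} {p : Pattern d N r} {ω : Fin d × Fin N → Fin N}
    (h : p.Occurs ω) : Function.Injective p.source := by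
  intro j j' hjj
  have ht : p.target j = p.target j' := by rw [← h.2, ← h.2, hjj]
  have hs := congrArg Prod.snd hjj
  simp only [Pattern.source, Pattern.target] at hs ht
  have key : ∀ a b : Fin (r + 3), a = b + 1 → a + 1 = b → False := by
    intro a b h1 h2
    rw [h1, add_assoc] at h2
    have h3 : (1 + 1 : Fin (r + 3)) = 0 := by simpa using h2
    have h4 := congrArg Fin.val h3
    rw [Fin.val_add] at h4
    simp [Nat.mod_eq_of_lt (show 2 < r + 3 by omega)] at h4
  split_ifs at hs ht
  · exact h.1 hs
  · exact (key j j' (h.1 hs) (h.1 ht)).elim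
  · exact (key j j' (h.1 ht) (h.1 hs)).elim
  · exact h.1 ht

open scoped Classical in
/-- The patterns of length `r + 3` that are cycles of the graph defined by `ω`. -/
noncomputable def cycles (r : ℕ) (ω : Fin d × Fin N → Fin N) : Finset (Pattern d N r) :=
  univ.filter fun p => p.Occurs ω

open scoped Classical in
/-- The expected number of cycle patterns of length `r + 3` is at most `(2 * d) ^ (r + 3)`. -/
lemma sum_card_cycles_le (r : ℕ) (hN : 0 < N) :
    ∑ ω : Fin d × Fin N → Fin N, (cycles r ω).card ≤ (2 * d) ^ (r + 3) * N ^ (d * N) := by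
  have h1 : ∑ ω : Fin d × Fin N → Fin N, (cycles r ω).card
      = ∑ p : Pattern d N r, (univ.filter fun ω => p.Occurs ω).card := by
    simp only [cycles, card_filter]
    exact sum_comm
  have h2 : ∀ p : Pattern d N r,
      (univ.filter fun ω : Fin d × Fin N → Fin N => p.Occurs ω).card * N ^ (r + 3)
        ≤ N ^ (d * N) := by
    intro p
    by_cases hp : ∃ ω, p.Occurs ω
    · obtain ⟨ω, hω⟩ := hp
      have := card_prescribed_le p.source hω.source_injective p.target
      simp only [Fintype.card_fin, Fintype.card_prod] at this
      refine le_trans (Nat.mul_le_mul_right _ (card_le_card ?_)) this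
      intro ω'
      simp only [mem_filter, mem_univ, true_and]
      exact fun h => h.2
    · have : (univ.filter fun ω : Fin d × Fin N → Fin N => p.Occurs ω) = ∅ := by
        simpa [filter_eq_empty_iff] using hp
      simp [this]
  have h3 : (∑ p : Pattern d N r, (univ.filter fun ω => p.Occurs ω).card) * N ^ (r + 3)
      ≤ ((2 * d) ^ (r + 3) * N ^ (d * N)) * N ^ (r + 3) := by
    rw [sum_mul]
    refine le_trans (sum_le_sum fun p _ => h2 p) ?_
    rw [sum_const, card_univ, smul_eq_mul]
    simp only [Fintype.card_prod, Fintype.card_fun, Fintype.card_fin, Fintype.card_bool]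
    rw [mul_pow]
    apply le_of_eq
    ring
  rw [h1]
  exact Nat.le_of_mul_le_mul_right h3 (by positivity)

end Cycles

/-! ### Holes of the random graph -/

section Holes

/-- No map of the family `ω` sends a vertex of `A` into `B`. -/
def IsHole {d N : ℕ} (ω : Fin d × Fin N → Fin N) (A B : Finset (Fin N)) : Prop :=
  ∀ i, ∀ a ∈ A, ω (i, a) ∉ B

lemma exists_pow_bound (q : ℕ) (hq : 2 ≤ q) : ∃ d : ℕ, 8 ^ q * (q - 1) ^ d ≤ q ^ d := by
  obtain ⟨p, rfl⟩ : ∃ p, q = p + 1 := ⟨q - 1, by omega⟩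
  have hp : (0 : ℝ) < p := by exact_mod_cast (by omega : 0 < p)
  obtain ⟨d, hd⟩ := pow_unbounded_of_one_lt ((8 : ℝ) ^ (p + 1))
    (show (1 : ℝ) < (p + 1) / p by rw [lt_div_iff₀ hp]; linarith)
  refine ⟨d, ?_⟩
  rw [div_pow, lt_div_iff₀ (by positivity)] at hd
  rw [Nat.add_sub_cancel]
  exact_mod_cast hd.le

open scoped Classical in
/-- With `d` large enough in terms of `q`, at most half of all `ω` have a hole with both sides of
size `L = N / q`. -/
lemma card_bad_le (q d L : ℕ) (hq : 2 ≤ q) (hL : 0 < L) (hd : 8 ^ q * (q - 1) ^ d ≤ q ^ d) :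
    2 * (univ.filter fun ω : Fin d × Fin (q * L) → Fin (q * L) =>
      ∃ A B : Finset (Fin (q * L)), A.card = L ∧ B.card = L ∧ IsHole ω A B).card
        ≤ (q * L) ^ (d * (q * L)) := by
  set N := q * L with hN
  have hNpos : 0 < N := by positivity
  have h1 : ∀ A B : Finset (Fin N), A.card = L → B.card = L →
      (univ.filter fun ω : Fin d × Fin N → Fin N => IsHole ω A B).card * 8 ^ N
        ≤ N ^ (d * N) := by
    intro A B hA hB
    have h := card_constrained_le (I := Fin d × Fin N) (V := Fin N) (univ ×ˢ A) (fun _ => Bᶜ)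
      ((q - 1) * L) (by
        intro a _
        rw [card_compl, Fintype.card_fin, hB, hN, Nat.sub_mul, one_mul])
    simp only [card_product, card_univ, Fintype.card_fin, Fintype.card_prod, hA] at h
    have h2 : (univ.filter fun ω : Fin d × Fin N → Fin N => IsHole ω A B)
        = univ.filter fun ω : Fin d × Fin N → Fin N =>
          ∀ a ∈ (univ : Finset (Fin d)) ×ˢ A, ω a ∈ Bᶜ := by
      ext ω
      rw [mem_filter, mem_filter]
      simp [IsHole]
    rw [h2]
    set K := (univ.filter fun ω : Fin d × Fin N → Fin N =>
          ∀ a ∈ (univ : Finset (Fin d)) ×ˢ A, ω a ∈ Bᶜ).card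
    have h3 : 8 ^ N * (q - 1) ^ (d * L) ≤ q ^ (d * L) := by
      have := Nat.pow_le_pow_left hd L
      rwa [mul_pow, ← pow_mul, ← pow_mul, ← pow_mul] at this
    have hpos : 0 < (q - 1) ^ (d * L) * L ^ (d * L) := by
      have : 0 < q - 1 := by omega
      positivity
    refine Nat.le_of_mul_le_mul_right ?_ hpos
    calc K * 8 ^ N * ((q - 1) ^ (d * L) * L ^ (d * L))
        = K * (8 ^ N * (q - 1) ^ (d * L)) * L ^ (d * L) := by ring
      _ ≤ K * q ^ (d * L) * L ^ (d * L) := by gcongr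
      _ = K * N ^ (d * L) := by rw [hN, mul_pow]; ring
      _ ≤ ((q - 1) * L) ^ (d * L) * N ^ (d * N) := h
      _ = N ^ (d * N) * ((q - 1) ^ (d * L) * L ^ (d * L)) := by rw [mul_pow]; ring
  set bad := univ.filter fun ω : Fin d × Fin N → Fin N =>
      ∃ A B : Finset (Fin N), A.card = L ∧ B.card = L ∧ IsHole ω A B with hbad
  have h2 : bad.card ≤ ∑ P ∈ (powersetCard L (univ : Finset (Fin N))) ×ˢ
      (powersetCard L (univ : Finset (Fin N))),
      (univ.filter fun ω : Fin d × Fin N → Fin N => IsHole ω P.1 P.2).card := by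
    refine le_trans (card_le_card ?_) card_biUnion_le
    intro ω hω
    obtain ⟨A, B, hA, hB, h⟩ := (mem_filter.1 hω).2
    simp only [mem_biUnion, mem_product, mem_powersetCard_univ, mem_filter, mem_univ, true_and]
    exact ⟨(A, B), ⟨hA, hB⟩, h⟩
  have h3 : bad.card * 8 ^ N ≤ 4 ^ N * N ^ (d * N) := by
    refine le_trans (Nat.mul_le_mul_right _ h2) ?_
    rw [sum_mul]
    refine le_trans (sum_le_card_nsmul _ _ (N ^ (d * N)) ?_) ?_
    · intro P hP
      simp only [mem_product, mem_powersetCard_univ] at hP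
      exact h1 P.1 P.2 hP.1 hP.2
    · rw [smul_eq_mul]
      refine Nat.mul_le_mul_right _ ?_
      have h5 : (powersetCard L (univ : Finset (Fin N))).card ≤ 2 ^ N := by
        refine le_trans (card_le_univ _) ?_
        simp
      calc _ ≤ 2 ^ N * 2 ^ N := by rw [card_product]; exact Nat.mul_le_mul h5 h5
        _ = 4 ^ N := by rw [← mul_pow]; norm_num
  have h4 : bad.card * 2 ^ N ≤ N ^ (d * N) := by
    refine Nat.le_of_mul_le_mul_left ?_ (show 0 < 4 ^ N by positivity)
    calc 4 ^ N * (bad.card * 2 ^ N) = bad.card * (4 * 2) ^ N := by rw [mul_pow]; ring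
      _ ≤ _ := h3
  calc 2 * bad.card ≤ bad.card * 2 ^ N := by
        rw [mul_comm]
        exact Nat.mul_le_mul_left _ (Nat.le_self_pow hNpos.ne' 2)
    _ ≤ _ := h4

end Holes

/-! ### The sparse graph -/

open scoped Classical in
lemma exists_good_function (g q d L : ℕ) (hq : 2 ≤ q) (hL : 0 < L)
    (hd : 8 ^ q * (q - 1) ^ d ≤ q ^ d) :
    ∃ ω : Fin d × Fin (q * L) → Fin (q * L),
      (∀ A B : Finset (Fin (q * L)), A.card = L → B.card = L → ¬ IsHole ω A B) ∧
      ∑ r ∈ range g, (cycles r ω).card ≤ 2 * ∑ r ∈ range g, (2 * d) ^ (r + 3) := by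
  by_contra! hcon
  have hbad := card_bad_le q d L hq hL hd
  set N := q * L with hN
  have hNpos : 0 < N := by positivity
  set C := ∑ r ∈ range g, (2 * d) ^ (r + 3)
  set bad := univ.filter fun ω : Fin d × Fin N → Fin N =>
      ∃ A B : Finset (Fin N), A.card = L ∧ B.card = L ∧ IsHole ω A B with hb
  have hcard : bad.card + badᶜ.card = N ^ (d * N) := by
    rw [card_add_card_compl]; simp
  have hup : ∑ ω : Fin d × Fin N → Fin N, ∑ r ∈ range g, (cycles r ω).card
      ≤ C * N ^ (d * N) := by
    rw [sum_comm, sum_mul]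
    exact sum_le_sum fun r _ => sum_card_cycles_le r hNpos
  have hlow : badᶜ.card * (2 * C + 1)
      ≤ ∑ ω : Fin d × Fin N → Fin N, ∑ r ∈ range g, (cycles r ω).card := by
    refine le_trans ?_ (sum_le_sum_of_subset (subset_univ badᶜ))
    rw [← smul_eq_mul]
    refine card_nsmul_le_sum _ _ _ fun ω hω => ?_
    refine hcon ω fun A B hA hB hh => ?_
    rw [mem_compl] at hω
    exact hω (mem_filter.2 ⟨mem_univ _, A, B, hA, hB, hh⟩)
  have hpos : 0 < N ^ (d * N) := by positivity
  nlinarith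

open scoped Classical in
/-- Sparse graphs without linear holes: no cycles of length at most `g + 2`, and an edge between
any two disjoint sets each containing at least `2 / q` of all vertices. -/
lemma exists_sparse_graph (g q : ℕ) (hq : 2 ≤ q) : ∃ L : ℕ, 2 ≤ L ∧
    ∃ G : SimpleGraph (Fin (q * L)),
      (∀ r < g, ∀ x : Fin (r + 3) → Fin (q * L), Function.Injective x →
        ¬ ∀ j, G.Adj (x j) (x (j + 1))) ∧
      ∀ A B : Finset (Fin (q * L)), Disjoint A B → 2 * L ≤ A.card → 2 * L ≤ B.card →
        ∃ a ∈ A, ∃ b ∈ B, G.Adj a b := by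
  obtain ⟨d, hd⟩ := exists_pow_bound q hq
  set C := ∑ r ∈ range g, (2 * d) ^ (r + 3) with hC
  refine ⟨2 * C + 2, by omega, ?_⟩
  set L := 2 * C + 2 with hL
  obtain ⟨ω, hhole, hcyc⟩ := exists_good_function g q d L hq (by omega) hd
  -- one vertex of every short cycle
  set X : Finset (Fin (q * L)) := (range g).biUnion fun r => (cycles r ω).image fun p => p.1 0 with hX
  have hXcard : X.card ≤ L := by
    calc X.card ≤ ∑ r ∈ range g, ((cycles r ω).image fun p => p.1 0).card := card_biUnion_le
      _ ≤ ∑ r ∈ range g, (cycles r ω).card := sum_le_sum fun r _ => card_image_le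
      _ ≤ L := by omega
  refine ⟨SimpleGraph.fromRel fun u v => u ∉ X ∧ v ∉ X ∧ ∃ i, ω (i, u) = v, ?_, ?_⟩
  · intro r hr x hx hadj
    have hx0 : x 0 ∉ X := by
      have := hadj 0
      rw [SimpleGraph.fromRel_adj] at this
      rcases this.2 with h | h
      · exact h.1
      · exact h.2.1
    have hs : ∀ j, ∃ (i : Fin d) (s : Bool),
        ω (i, if s then x j else x (j + 1)) = if s then x (j + 1) else x j := by
      intro j
      have := hadj j
      rw [SimpleGraph.fromRel_adj] at this
      rcases this.2 with ⟨-, -, i, h⟩ | ⟨-, -, i, h⟩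
      · exact ⟨i, true, by simpa using h⟩
      · exact ⟨i, false, by simpa using h⟩
    choose i s his using hs
    refine hx0 (mem_biUnion.2 ⟨r, mem_range.2 hr, mem_image.2 ⟨(x, i, s), ?_, rfl⟩⟩)
    exact mem_filter.2 ⟨mem_univ _, hx, his⟩
  · intro A B hAB hA hB
    have hA' : L ≤ (A \ X).card := by
      have := le_card_sdiff X A
      omega
    have hB' : L ≤ (B \ X).card := by
      have := le_card_sdiff X B
      omega
    obtain ⟨A₁, hA₁, hA₁c⟩ := exists_subset_card_eq hA'
    obtain ⟨B₁, hB₁, hB₁c⟩ := exists_subset_card_eq hB'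
    have := hhole A₁ B₁ hA₁c hB₁c
    simp only [IsHole, not_forall, not_not] at this
    obtain ⟨i, a, ha, hb⟩ := this
    have ha' := mem_sdiff.1 (hA₁ ha)
    have hb' := mem_sdiff.1 (hB₁ hb)
    refine ⟨a, ha'.1, _, hb'.1, ?_⟩
    rw [SimpleGraph.fromRel_adj]
    exact ⟨fun h => (Finset.disjoint_left.1 hAB ha'.1) (h ▸ hb'.1),
      Or.inl ⟨ha'.2, hb'.2, i, rfl⟩⟩

/-! ### The tournament of a graph -/

open scoped Classical in
/-- The tournament on `Fin n` whose backward arcs, in the natural order, are the edges of `G`. -/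
noncomputable def ofGraph {n : ℕ} (G : SimpleGraph (Fin n)) : Tournament n where
  arc u v := decide ((u < v ∧ ¬ G.Adj u v) ∨ (v < u ∧ G.Adj u v))
  irrefl v := by simp
  total u v h := by
    rw [Bool.eq_not_iff, Ne, decide_eq_decide, G.adj_comm v u]
    rcases lt_or_gt_of_ne h with h | h <;> simp [h, h.not_gt]

lemma ofGraph_arc {n : ℕ} (G : SimpleGraph (Fin n)) (u v : Fin n) :
    (ofGraph G).arc u v = true ↔ (u < v ∧ ¬ G.Adj u v) ∨ (v < u ∧ G.Adj u v) := by
  simp [ofGraph]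

/-- If the tournament of a graph without cycles of length at most `g + 2`, where `m ≤ g`, contains `H`, the
order of the copy of `H` exhibits a backward arc digraph that is a forest. -/
lemma exists_forest_of_contains {n m g : ℕ} (H : Tournament m) (G : SimpleGraph (Fin n))
    (hg : m ≤ g)
    (hG : ∀ r < g, ∀ x : Fin (r + 3) → Fin n, Function.Injective x →
        ¬ ∀ j, G.Adj (x j) (x (j + 1)))
    (hH : (ofGraph G).Contains H) :
    ∃ θ : Fin m ≃ Fin m,
      (SimpleGraph.fromRel fun u v => (H.relabel θ).Back u v).IsAcyclic := by
  obtain ⟨f, hf⟩ := hH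
  set θ := Tuple.sort f with hθ
  have hmono : StrictMono (f ∘ θ) :=
    (Tuple.monotone_sort f).strictMono_of_injective (f.injective.comp θ.injective)
  refine ⟨θ, ?_⟩
  set B := SimpleGraph.fromRel fun u v => (H.relabel θ).Back u v with hB
  have hback : ∀ u v, (H.relabel θ).Back u v → G.Adj (f (θ u)) (f (θ v)) := by
    rintro u v ⟨hlt, harc⟩
    have h1 := (ofGraph_arc G _ _).1 (hf _ _ harc)
    have h2 : f (θ v) < f (θ u) := hmono hlt
    rcases h1 with h1 | h1
    · exact absurd h1.1 h2.not_gt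
    · exact h1.2
  have hadj : ∀ u v, B.Adj u v → G.Adj (f (θ u)) (f (θ v)) := by
    intro u v h
    rw [hB, SimpleGraph.fromRel_adj] at h
    rcases h.2 with h | h
    · exact hback _ _ h
    · exact (hback _ _ h).symm
  intro v c hc
  obtain ⟨r, hr⟩ : ∃ r, c.length = r + 3 := ⟨c.length - 3, by have := hc.three_le_length; omega⟩
  have hinj : Function.Injective fun j : Fin (r + 3) => c.getVert j := by
    intro i j hij
    refine Fin.ext (hc.getVert_injOn' ?_ ?_ hij)
    · simp only [Set.mem_ofPred_eq]; omega
    · simp only [Set.mem_ofPred_eq]; omega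
  have hrm : r + 3 ≤ m := by
    simpa using Fintype.card_le_of_injective _ hinj
  refine hG r (by omega) (fun j => f (θ (c.getVert j)))
    (fun i j hij => hinj (θ.injective (f.injective hij))) fun j => hadj _ _ ?_
  have hstep := c.adj_getVert_succ (i := j) (by omega)
  rcases Nat.lt_or_ge (j.val + 1) (r + 3) with h | h
  · rwa [Fin.val_add_one_of_lt' h]
  · have hj : j = Fin.last (r + 2) := Fin.ext (by simp; omega)
    have h1 : j + 1 = 0 := by rw [hj, Fin.last_add_one]
    have h2 : c.getVert (j.val + 1) = v := by
      rw [show j.val + 1 = c.length by omega, c.getVert_length]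
    rw [h2] at hstep
    rw [h1]
    simpa using hstep

/-- Two large sets have large subsets, one lying entirely before the other: cut at the position
where the first `K` elements of `A` end. -/
lemma exists_separated {n K : ℕ} (A B : Finset (Fin n)) (hA : 2 * K ≤ A.card)
    (hB : 2 * K ≤ B.card) :
    ∃ A' ⊆ A, ∃ B' ⊆ B, K ≤ A'.card ∧ K ≤ B'.card ∧
      ((∀ a ∈ A', ∀ b ∈ B', a < b) ∨ (∀ a ∈ A', ∀ b ∈ B', b < a)) := by
  have hcut : ∃ t : ℕ, (A.filter fun a => a.val < t).card = K := by
    have hex : ∃ t : ℕ, K ≤ (A.filter fun a => a.val < t).card := by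
      refine ⟨n, ?_⟩
      rw [filter_true_of_mem fun a _ => a.isLt]
      omega
    classical
    refine ⟨Nat.find hex, le_antisymm ?_ (Nat.find_spec hex)⟩
    rcases h : Nat.find hex with _ | t
    · simp
    · have hlt := Nat.find_min hex (m := t) (by omega)
      have hsub : (A.filter fun a => a.val < t + 1)
          ⊆ (A.filter fun a => a.val < t) ∪ A.filter fun a => a.val = t := by
        intro a
        simp only [mem_filter, mem_union]
        intro ha
        rcases Nat.lt_or_ge a.val t with h | h
        · exact Or.inl ⟨ha.1, h⟩
        · exact Or.inr ⟨ha.1, by omega⟩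
      have h1 := (card_le_card hsub).trans (card_union_le _ _)
      have h2 : (A.filter fun a => a.val = t).card ≤ 1 :=
        card_le_one.2 fun a ha b hb =>
          Fin.ext ((mem_filter.1 ha).2.trans (mem_filter.1 hb).2.symm)
      omega
  obtain ⟨t, ht⟩ := hcut
  have hAs := card_filter_add_card_filter_not (s := A) (fun a => a.val < t)
  have hBs := card_filter_add_card_filter_not (s := B) (fun a => a.val < t)
  by_cases hb : K ≤ (B.filter fun a => a.val < t).card
  · refine ⟨_, filter_subset _ _, _, filter_subset _ _,
      (show K ≤ (A.filter fun a => ¬ a.val < t).card by omega), hb, Or.inr ?_⟩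
    intro a ha b hb
    have h1 := (mem_filter.1 ha).2
    have h2 := (mem_filter.1 hb).2
    exact Fin.lt_def.2 (by omega)
  · refine ⟨_, filter_subset _ _, _, filter_subset _ _, ht.ge,
      (show K ≤ (B.filter fun a => ¬ a.val < t).card by omega), Or.inl ?_⟩
    intro a ha b hb
    have h1 := (mem_filter.1 ha).2
    have h2 := (mem_filter.1 hb).2
    exact Fin.lt_def.2 (by omega)

/-- If `G` has no 4-cycle and an edge between any two disjoint sets of size `K ≥ 2`, then its
tournament has no pure pair of order `2 * K`. -/
lemma not_isPurePair_ofGraph {n K : ℕ} (hK : 2 ≤ K) (G : SimpleGraph (Fin n))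
    (hG4 : ∀ x : Fin 4 → Fin n, Function.Injective x → ¬ ∀ j, G.Adj (x j) (x (j + 1)))
    (hGh : ∀ A B : Finset (Fin n), Disjoint A B → K ≤ A.card → K ≤ B.card →
        ∃ a ∈ A, ∃ b ∈ B, G.Adj a b)
    (A B : Finset (Fin n)) (hA : 2 * K ≤ A.card) (hB : 2 * K ≤ B.card) :
    ¬ (ofGraph G).IsPurePair A B := by
  rintro ⟨hdis, harc⟩
  obtain ⟨A', hA', B', hB', hAc, hBc, h | h⟩ := exists_separated A B hA hB
  · obtain ⟨a, ha, b, hb, hab⟩ := hGh A' B' (disjoint_of_subset_left hA'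
      (disjoint_of_subset_right hB' hdis)) hAc hBc
    rcases (ofGraph_arc G a b).1 (harc a (hA' ha) b (hB' hb)) with h1 | h1
    · exact h1.2 hab
    · exact h1.1.not_gt (h a ha b hb)
  · have hadj : ∀ a ∈ A', ∀ b ∈ B', G.Adj a b := by
      intro a ha b hb
      rcases (ofGraph_arc G a b).1 (harc a (hA' ha) b (hB' hb)) with h1 | h1
      · exact absurd (h a ha b hb) h1.1.not_gt
      · exact h1.2
    obtain ⟨a₁, ha₁, a₂, ha₂, hane⟩ := one_lt_card.1 (show 1 < A'.card by omega)
    obtain ⟨b₁, hb₁, b₂, hb₂, hbne⟩ := one_lt_card.1 (show 1 < B'.card by omega)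
    have e11 := hadj _ ha₁ _ hb₁
    have e12 := hadj _ ha₁ _ hb₂
    have e21 := hadj _ ha₂ _ hb₁
    have e22 := hadj _ ha₂ _ hb₂
    refine hG4 ![a₁, b₁, a₂, b₂] ?_ ?_
    · have n11 := e11.ne
      have n11' := e11.ne'
      have n12 := e12.ne
      have n12' := e12.ne'
      have n21 := e21.ne
      have n21' := e21.ne'
      have n22 := e22.ne
      have n22' := e22.ne'
      have na := hane.symm
      have nb := hbne.symm
      clear e11 e12 e21 e22 hadj
      intro i j hij
      fin_cases i <;> fin_cases j <;> simp_all
    · intro j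
      fin_cases j
      · exact e11
      · exact e21.symm
      · exact e22
      · exact e12.symm

end Tournament

/-- Theorem 1.3 (Chudnovsky et al.): if a tournament `H` has the strong EH-property,
then there is an ordering `θ` of its vertices for which the backward arc digraph
`B(H,θ)` is a forest (its underlying undirected graph contains no cycle). -/
theorem strongEH_backward_forest {m : ℕ} (H : Tournament m) (h : H.StrongEH) :
    ∃ θ : Fin m ≃ Fin m,
      (SimpleGraph.fromRel fun u v => (H.relabel θ).Back u v).IsAcyclic := by
  obtain ⟨c, hc, hEH⟩ := h
  -- `q` is chosen so that `c * n ≥ 4 * L` for `n = q * L`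
  obtain ⟨q₀, hq₀⟩ := exists_nat_ge (4 / c)
  set q := q₀ + 2 with hq
  have hcq : 4 ≤ c * q := by
    rw [div_le_iff₀ hc] at hq₀
    rw [hq]; push_cast; nlinarith
  -- `g = m + 2` excludes cycles of length at most `m` as well as 4-cycles
  obtain ⟨L, hL, G, hcyc, hhole⟩ := Tournament.exists_sparse_graph (m + 2) q (by omega)
  by_cases hcon : (Tournament.ofGraph G).Contains H
  · exact Tournament.exists_forest_of_contains H G (by omega) hcyc hcon
  · exfalso
    obtain ⟨A, B, hpure, hord⟩ := hEH (q * L) _ hcon (by nlinarith)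
    have hmin : 4 * L ≤ min A.card B.card := by
      have : (4 * L : ℝ) ≤ ((min A.card B.card : ℕ) : ℝ) := by
        refine le_trans ?_ hord
        push_cast
        rw [← mul_assoc]
        exact mul_le_mul_of_nonneg_right (by exact_mod_cast hcq) (by positivity)
      exact_mod_cast this
    rw [le_min_iff] at hmin
    exact Tournament.not_isPurePair_ofGraph (K := 2 * L) (by omega) G
      (fun x hx => hcyc 1 (by omega) x hx) hhole A B (by omega) (by omega) hpure
end

section
/- Every path-galaxy has the strong EH-property; that is, for every tournament H that is a path-galaxy under some ordering of its vertices, there exists c > 0 such that every H-free tournament T with |V(T)| > 1 has a pure pair of order at least c·|V(T)|. -/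
namespace Tournament

variable {n m : ℕ}

/-- `P` is a left star of `T` under the natural ordering, with center `c` (its first
vertex): the backward arcs inside `P` are exactly the arcs from every other vertex of
`P` to `c`. -/
def IsLeftStarOn (T : Tournament n) (P : Finset (Fin n)) (c : Fin n) : Prop :=
  c ∈ P ∧ (∀ x ∈ P, c ≤ x) ∧
    ∀ u ∈ P, ∀ v ∈ P, (T.Back u v ↔ (v = c ∧ u ≠ c))

/-- `P` is a right star of `T` under the natural ordering, with center `c` (its last
vertex): the backward arcs inside `P` are exactly the arcs from `c` to every other
vertex of `P`. -/
def IsRightStarOn (T : Tournament n) (P : Finset (Fin n)) (c : Fin n) : Prop :=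
  c ∈ P ∧ (∀ x ∈ P, x ≤ c) ∧
    ∀ u ∈ P, ∀ v ∈ P, (T.Back u v ↔ (u = c ∧ v ≠ c))

/-- `T` restricted to `W` is a path-galaxy under (the restriction of) the natural
ordering, with stars `S 0, ..., S (l-1)` (with centers `ctr i`), leftover singleton
part `X`, and with the leaves of every star consecutive within the ground set `G`:
the vertex set `W` is partitioned into the frontier stars and `X`, the backward arcs
of `T` inside `W` are exactly the union of the backward arcs of the stars, no center
of a star lies between leaves of another star, and the leaves of every star are
consecutive among the vertices of `G`. -/
def PathGalaxyData (T : Tournament n) (W G : Finset (Fin n)) (l : ℕ)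
    (S : Fin l → Finset (Fin n)) (ctr : Fin l → Fin n) (X : Finset (Fin n)) : Prop :=
  (∀ i, S i ⊆ W) ∧ X ⊆ W ∧
  (∀ i j : Fin l, i ≠ j → Disjoint (S i) (S j)) ∧
  (∀ i, Disjoint (S i) X) ∧
  (∀ v ∈ W, v ∈ X ∨ ∃ i, v ∈ S i) ∧
  (∀ i, T.IsLeftStarOn (S i) (ctr i) ∨ T.IsRightStarOn (S i) (ctr i)) ∧
  (∀ u ∈ W, ∀ v ∈ W, T.Back u v → ∃ i, u ∈ S i ∧ v ∈ S i) ∧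
  (∀ i j : Fin l, i ≠ j → ∀ u ∈ (S i).erase (ctr i), ∀ w ∈ (S i).erase (ctr i),
    ¬(u < ctr j ∧ ctr j < w)) ∧
  (∀ i, ∀ u ∈ (S i).erase (ctr i), ∀ w ∈ (S i).erase (ctr i), ∀ v ∈ G,
    u ≤ v → v ≤ w → v ∈ (S i).erase (ctr i))

/-- `T` restricted to `W` is a path-galaxy under (the restriction of) the natural
ordering, with leaves of every star consecutive within the ground set `G`. -/
def IsPathGalaxyOn (T : Tournament n) (W G : Finset (Fin n)) : Prop :=
  ∃ (l : ℕ) (S : Fin l → Finset (Fin n)) (ctr : Fin l → Fin n) (X : Finset (Fin n)),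
    PathGalaxyData T W G l S ctr X

/-- `H` is a path-galaxy under some ordering of its vertices: a galaxy in which the
leaves of every star are consecutive under the ordering. -/
def IsPathGalaxy (H : Tournament n) : Prop :=
  ∃ θ : Fin n ≃ Fin n, (H.relabel θ).IsPathGalaxyOn Finset.univ Finset.univ

end Tournament

namespace Tournament

lemma arc_of_not {n : ℕ} (T : Tournament n) {x y : Fin n} (h : x ≠ y)
    (hxy : ¬ T.arc x y = true) : T.arc y x = true := by
  have := T.total x y h
  simpa [hxy] using this

lemma ne_of_arc {n : ℕ} (T : Tournament n) {x y : Fin n} (h : T.arc x y = true) : x ≠ y := by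
  rintro rfl
  simp [T.irrefl] at h

lemma not_arc_of_arc {n : ℕ} (T : Tournament n) {x y : Fin n} (h : T.arc x y = true) :
    ¬ T.arc y x = true := by
  have := T.total x y (T.ne_of_arc h)
  simpa [h] using this

/-! ### Greedy embedding of an arbitrary pattern -/

/-- Greedy embedding: if no two subsets of `S` of size at least `τ` have the property that every
vertex of the first has few out-neighbours (or few in-neighbours) in the second, then every
orientation pattern `P` can be realised inside large enough candidate sets `V j`. -/
lemma greedy {n : ℕ} (T : Tournament n) (S : Finset (Fin n)) (η τ M : ℝ) (hη : 0 < η)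
    (hη1 : η ≤ 1) (hτ : 0 < τ)
    (hno : ∀ A B : Finset (Fin n), A ⊆ S → B ⊆ S → τ ≤ A.card → τ ≤ B.card →
      (∃ a ∈ A, η * B.card ≤ ((B.filter (fun b => T.arc a b = true)).card : ℝ)) ∧
      (∃ a ∈ A, η * B.card ≤ ((B.filter (fun b => T.arc b a = true)).card : ℝ)))
    (k : ℕ) (hk : (k : ℝ) < M) (P : Fin k → Fin k → Bool) (V : Fin k → Finset (Fin n))
    (hVS : ∀ j, V j ⊆ S) (hV : ∀ j, τ * M ≤ η ^ k * (V j).card) :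
    ∃ f : Fin k → Fin n, (∀ j, f j ∈ V j) ∧ ∀ i j, i < j →
      if P i j then T.arc (f i) (f j) = true else T.arc (f j) (f i) = true := by
  induction k with
  | zero => exact ⟨Fin.elim0, fun j => j.elim0, fun i => i.elim0⟩
  | succ k ih =>
    have hM : 1 ≤ M := by
      have : (0 : ℝ) ≤ k := Nat.cast_nonneg k
      push_cast at hk; linarith
    have hVτ : ∀ j, τ * M ≤ (V j).card := fun j =>
      (hV j).trans (mul_le_of_le_one_left (Nat.cast_nonneg _) (pow_le_one₀ hη.le hη1))
    have hVτ' : ∀ j, τ ≤ (V j).card := fun j =>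
      (le_mul_of_one_le_right hτ.le hM).trans (hVτ j)
    let N : Fin k → Fin n → Finset (Fin n) := fun j v =>
      (V j.succ).filter (fun w => if P 0 j.succ then T.arc v w = true else T.arc w v = true)
    let Bad : Fin k → Finset (Fin n) := fun j =>
      (V 0).filter (fun v => ((N j v).card : ℝ) < η * (V j.succ).card)
    have hBad : ∀ j, ((Bad j).card : ℝ) ≤ τ := by
      intro j
      by_contra! hlt
      obtain ⟨⟨a, ha, h1⟩, ⟨b, hb, h2⟩⟩ := hno (Bad j) (V j.succ)
        ((Finset.filter_subset _ _).trans (hVS 0)) (hVS _) hlt.le (hVτ' _)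
      have ha' := (Finset.mem_filter.1 ha).2
      have hb' := (Finset.mem_filter.1 hb).2
      by_cases hP : P 0 j.succ = true
      · simp only [N, hP, if_true] at ha'
        linarith
      · simp only [N, hP] at hb'
        simp at hb'
        linarith
    obtain ⟨v, hv, hvB⟩ : ∃ v ∈ V 0, v ∉ Finset.univ.biUnion Bad := by
      by_contra! hsub
      have h1 : ((V 0).card : ℝ) ≤ ∑ j : Fin k, ((Bad j).card : ℝ) := by
        exact_mod_cast (Finset.card_le_card hsub).trans Finset.card_biUnion_le
      have h2 : ∑ j : Fin k, ((Bad j).card : ℝ) ≤ k * τ := by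
        refine (Finset.sum_le_sum fun j _ => hBad j).trans ?_
        simp
      have h3 := hVτ 0
      push_cast at hk
      nlinarith
    have hvN : ∀ j, η * (V j.succ).card ≤ (N j v).card := by
      intro j
      by_contra! hlt
      exact hvB (Finset.mem_biUnion.2 ⟨j, Finset.mem_univ _, Finset.mem_filter.2 ⟨hv, hlt⟩⟩)
    obtain ⟨f, hf, hfarc⟩ := ih (by push_cast at hk; linarith)
      (fun i j => P i.succ j.succ) (fun j => N j v)
      (fun j => (Finset.filter_subset _ _).trans (hVS _)) (by
        intro j
        refine (hV j.succ).trans ?_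
        rw [pow_succ, mul_assoc]
        exact mul_le_mul_of_nonneg_left (hvN j) (pow_nonneg hη.le _))
    refine ⟨Fin.cons v f, ?_, ?_⟩
    · intro j
      refine Fin.cases ?_ (fun j => ?_) j
      · simpa using hv
      · simpa using (Finset.mem_filter.1 (hf j)).1
    · intro i j hij
      induction j using Fin.cases with
      | zero => exact absurd hij (by simp)
      | succ j =>
        induction i using Fin.cases with
        | zero => simpa using (Finset.mem_filter.1 (hf j)).2
        | succ i => simpa using hfarc i j (by simpa using hij)

lemma contains_of_hom {n m : ℕ} (T : Tournament n) (H : Tournament m) (f : Fin m → Fin n)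
    (hf : ∀ x y, H.arc x y = true → T.arc (f x) (f y) = true) : T.Contains H := by
  refine ⟨⟨f, ?_⟩, hf⟩
  intro x y hxy
  by_contra hne
  by_cases h : H.arc x y = true
  · exact T.ne_of_arc (hf _ _ h) hxy
  · exact T.ne_of_arc (hf _ _ (H.arc_of_not hne h)) hxy.symm

/-! ### Long sequences of almost complete pairs -/

/-- The number of pairs `(a, b) ∈ A × B` for which `(a, b)` is not an arc. -/
def defect {n : ℕ} (T : Tournament n) (A B : Finset (Fin n)) : ℕ :=
  ∑ a ∈ A, (B.filter (fun b => ¬ T.arc a b = true)).card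

lemma defect_swap {n : ℕ} (T : Tournament n) (A B : Finset (Fin n)) :
    T.defect A B = ∑ b ∈ B, (A.filter (fun a => ¬ T.arc a b = true)).card :=
  Finset.sum_card_bipartiteAbove_eq_sum_card_bipartiteBelow _

lemma defect_mono_right {n : ℕ} (T : Tournament n) (A : Finset (Fin n)) {B B' : Finset (Fin n)}
    (h : B ⊆ B') : T.defect A B ≤ T.defect A B' :=
  Finset.sum_le_sum fun _ _ => Finset.card_le_card (Finset.filter_subset_filter _ h)

/-- The number of non-out-neighbours exceeds the number of in-neighbours by at most one, the
vertex itself. -/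
lemma card_not_arc_le {n : ℕ} (T : Tournament n) (a : Fin n) (B : Finset (Fin n)) :
    (B.filter (fun b => ¬ T.arc a b = true)).card ≤
      (B.filter (fun b => T.arc b a = true)).card + 1 := by
  refine (Finset.card_le_card ?_).trans
    (Finset.card_insert_le a (B.filter (fun b => T.arc b a = true)))
  intro b hb
  rw [Finset.mem_filter] at hb
  by_cases h : a = b
  · simp [h]
  · exact Finset.mem_insert_of_mem (Finset.mem_filter.2 ⟨hb.1, T.arc_of_not h hb.2⟩)

lemma card_not_arc_le' {n : ℕ} (T : Tournament n) (a : Fin n) (B : Finset (Fin n)) :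
    (B.filter (fun b => ¬ T.arc b a = true)).card ≤
      (B.filter (fun b => T.arc a b = true)).card + 1 := by
  refine (Finset.card_le_card ?_).trans
    (Finset.card_insert_le a (B.filter (fun b => T.arc a b = true)))
  intro b hb
  rw [Finset.mem_filter] at hb
  by_cases h : b = a
  · simp [h]
  · exact Finset.mem_insert_of_mem (Finset.mem_filter.2 ⟨hb.1, T.arc_of_not h hb.2⟩)

/-- Every large set of vertices of an `H`-free tournament contains two linear-sized sets with
almost all arcs directed from the first to the second. -/
lemma exists_pair {m : ℕ} (H : Tournament m) (ε : ℝ) (hε : 0 < ε) (hε1 : ε ≤ 1) :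
    ∃ δ : ℝ, 0 < δ ∧ ∀ (n : ℕ) (T : Tournament n), ¬ T.Contains H →
      ∀ S : Finset (Fin n), 1 ≤ δ * S.card → ∃ A B : Finset (Fin n), A ⊆ S ∧ B ⊆ S ∧
        δ * S.card ≤ A.card ∧ δ * S.card ≤ B.card ∧
        (T.defect A B : ℝ) ≤ ε * A.card * B.card := by
  set η : ℝ := ε / 2 with hη
  have hη0 : 0 < η := by positivity
  have hη1 : η ≤ 1 := by linarith
  have hM : (0 : ℝ) < m + 1 := by positivity
  refine ⟨η ^ (m + 1) / (m + 1), by positivity, ?_⟩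
  intro n T hfree S hS
  set s : ℝ := η ^ (m + 1) / (m + 1) * S.card with hs
  -- Dividing by `η` makes the single vertex in `card_not_arc_le` negligible in sets of size `τ`.
  have hτ1 : 1 ≤ η * (s / η) := by rwa [mul_div_cancel₀ _ hη0.ne']
  have hτs : s ≤ s / η := by
    rw [le_div_iff₀ hη0]
    exact mul_le_of_le_one_right (by linarith) hη1
  have hτ0 : 0 < s / η := by positivity
  by_contra! hcon
  apply hfree
  obtain ⟨f, -, hf⟩ := greedy T S η (s / η) (m + 1) hη0 hη1 hτ0 (by
    intro A B hA hB hAc hBc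
    have hBη : 1 ≤ η * B.card := hτ1.trans (mul_le_mul_of_nonneg_left hBc hη0.le)
    constructor
    · by_contra! hlt
      refine absurd (hcon B A hB hA (hτs.trans hBc) (hτs.trans hAc)) (not_lt.2 ?_)
      rw [defect_swap]
      push_cast
      calc (∑ a ∈ A, ((B.filter (fun b => ¬ T.arc b a = true)).card : ℝ))
          ≤ ∑ a ∈ A, ε * B.card := by
            refine Finset.sum_le_sum fun a ha => ?_
            have h1 : ((B.filter (fun b => ¬ T.arc b a = true)).card : ℝ) ≤
              (B.filter (fun b => T.arc a b = true)).card + 1 := by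
              exact_mod_cast T.card_not_arc_le' a B
            have h2 := hlt a ha
            have h3 : ε = 2 * η := by rw [hη]; ring
            rw [h3]; linarith
        _ = ε * B.card * A.card := by rw [Finset.sum_const, nsmul_eq_mul]; ring
    · by_contra! hlt
      refine absurd (hcon A B hA hB (hτs.trans hAc) (hτs.trans hBc)) (not_lt.2 ?_)
      unfold defect
      push_cast
      calc (∑ a ∈ A, ((B.filter (fun b => ¬ T.arc a b = true)).card : ℝ))
          ≤ ∑ a ∈ A, ε * B.card := by
            refine Finset.sum_le_sum fun a ha => ?_
            have h1 : ((B.filter (fun b => ¬ T.arc a b = true)).card : ℝ) ≤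
              (B.filter (fun b => T.arc b a = true)).card + 1 := by
              exact_mod_cast T.card_not_arc_le a B
            have h2 := hlt a ha
            have h3 : ε = 2 * η := by rw [hη]; ring
            rw [h3]; linarith
        _ = ε * A.card * B.card := by rw [Finset.sum_const, nsmul_eq_mul]; ring)
    m (by linarith) H.arc (fun _ => S) (fun _ => Finset.Subset.refl _) (by
      intro j
      apply le_of_eq
      rw [hs, pow_succ]
      field_simp)
  refine contains_of_hom T H f fun x y hxy => ?_
  rcases lt_trichotomy x y with h | h | h
  · simpa [hxy] using hf x y h
  · exact absurd h (H.ne_of_arc hxy)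
  · simpa [H.not_arc_of_arc hxy] using hf y x h

/-- An `H`-free tournament contains `K` linear-sized sets such that almost all arcs go from
earlier sets to later ones. -/
lemma exists_seq {m : ℕ} (H : Tournament m) (ε : ℝ) (hε : 0 < ε) (hε1 : ε ≤ 1) (K : ℕ) :
    ∃ c : ℝ, 0 < c ∧ c ≤ 1 ∧ ∀ (n : ℕ) (T : Tournament n), ¬ T.Contains H →
      ∀ S : Finset (Fin n), 1 ≤ c * S.card → ∃ A : Fin K → Finset (Fin n), (∀ i, A i ⊆ S) ∧
        (∀ i, c * S.card ≤ (A i).card) ∧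
        ∀ i j, i < j → (T.defect (A i) (A j) : ℝ) ≤ ε * (A i).card * (A j).card := by
  induction K with
  | zero => exact ⟨1, one_pos, le_rfl, fun n T _ S _ =>
      ⟨Fin.elim0, fun i => i.elim0, fun i => i.elim0, fun i => i.elim0⟩⟩
  | succ K ih =>
    obtain ⟨c, hc0, hc1, hc⟩ := ih
    -- The density parameter is scaled by `c` since the later sets are subsets of `B` of
    -- proportion at least `c`.
    obtain ⟨δ', hδ'0, hδ'⟩ := exists_pair H (ε * c) (by positivity)
      (mul_le_one₀ hε1 hc0.le hc1)
    refine ⟨min 1 δ' * c, by positivity, mul_le_one₀ (min_le_left _ _) hc0.le hc1, ?_⟩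
    intro n T hfree S hS
    have hS0 : (0 : ℝ) ≤ S.card := Nat.cast_nonneg _
    have hle : min 1 δ' * c * S.card ≤ δ' * S.card :=
      mul_le_mul_of_nonneg_right ((mul_le_of_le_one_right (by positivity) hc1).trans
        (min_le_right _ _)) hS0
    obtain ⟨A, B, hA, hB, hAc, hBc, hAB⟩ := hδ' n T hfree S (hS.trans hle)
    have hle2 : min 1 δ' * c * S.card ≤ c * B.card := by
      calc min 1 δ' * c * S.card = c * (min 1 δ' * S.card) := by ring
        _ ≤ c * (δ' * S.card) := by
          have := min_le_right 1 δ'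
          gcongr
        _ ≤ c * B.card := by gcongr
    obtain ⟨A', hA'B, hA'c, hA'⟩ := hc n T hfree B (hS.trans hle2)
    refine ⟨Fin.cons A A', ?_, ?_, ?_⟩
    · intro i
      refine Fin.cases ?_ (fun i => ?_) i
      · simpa using hA
      · simpa using (hA'B i).trans hB
    · intro i
      refine Fin.cases ?_ (fun i => ?_) i
      · simpa using hle.trans hAc
      · simpa using hle2.trans (hA'c i)
    · intro i j hij
      induction j using Fin.cases with
      | zero => exact absurd hij (by simp)
      | succ j =>
        induction i using Fin.cases with
        | zero =>
          simp only [Fin.cons_zero, Fin.cons_succ]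
          calc (T.defect A (A' j) : ℝ) ≤ T.defect A B := by
                exact_mod_cast T.defect_mono_right A (hA'B j)
            _ ≤ ε * c * A.card * B.card := hAB
            _ = ε * A.card * (c * B.card) := by ring
            _ ≤ ε * A.card * (A' j).card := by
              have := hA'c j
              gcongr
        | succ i => simpa using hA' i j (by simpa using hij)

/-- The arc between `v` and `w` goes forward, when `v` and `w` are placed in the sets with
(distinct) indices `i` and `j` respectively. -/
def Fwd {n K : ℕ} (T : Tournament n) (i j : Fin K) (v w : Fin n) : Prop :=
  if i < j then T.arc v w = true else T.arc w v = true

instance {n K : ℕ} (T : Tournament n) (i j : Fin K) (v w : Fin n) :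
    Decidable (T.Fwd i j v w) := by
  unfold Fwd; infer_instance

/-- Discarding atypical vertices turns the density condition into a degree condition. -/
lemma exists_typical {n K : ℕ} (T : Tournament n) (lam : ℝ) (hlam : 0 < lam)
    (A : Fin K → Finset (Fin n)) (hA0 : ∀ i, 0 < (A i).card)
    (hA : ∀ i j, i < j → (T.defect (A i) (A j) : ℝ) ≤
      lam / (4 * (K + 1)) * (A i).card * (A j).card) :
    ∃ B : Fin K → Finset (Fin n), (∀ i, ((A i).card : ℝ) ≤ 2 * (B i).card) ∧
      ∀ i j, i ≠ j → ∀ v ∈ B i,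
        (((B j).filter (fun w => ¬ T.Fwd i j v w)).card : ℝ) ≤ lam * (B j).card := by
  let W : Fin K → Fin K → Fin n → Finset (Fin n) := fun i j v =>
    (A j).filter (fun w => ¬ T.Fwd i j v w)
  let Bad : Fin K → Fin K → Finset (Fin n) := fun i j =>
    (A i).filter (fun v => i ≠ j ∧ lam / 2 * (A j).card < (W i j v).card)
  have hsum : ∀ i j, i ≠ j → (∑ v ∈ A i, ((W i j v).card : ℝ)) ≤
      lam / (4 * (K + 1)) * (A i).card * (A j).card := by
    intro i j hij
    rcases lt_or_gt_of_ne hij with h | h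
    · have := hA i j h
      unfold defect at this
      push_cast at this
      simpa [W, Fwd, h] using this
    · have := hA j i h
      rw [defect_swap] at this
      push_cast at this
      have h' : ¬ i < j := not_lt.2 h.le
      have e : lam / (4 * (K + 1)) * (A i).card * (A j).card =
        lam / (4 * (K + 1)) * (A j).card * (A i).card := by ring
      rw [e]
      simpa [W, Fwd, h'] using this
  have hBad : ∀ i j, ((Bad i j).card : ℝ) ≤ (A i).card / (2 * (K + 1)) := by
    intro i j
    by_cases hij : i = j
    · have : Bad i j = ∅ := by simp [Bad, hij]
      rw [this]; simp; positivity
    have h1 : ((Bad i j).card : ℝ) * (lam / 2 * (A j).card) ≤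
        lam / (4 * (K + 1)) * (A i).card * (A j).card := by
      refine le_trans ?_ (hsum i j hij)
      calc ((Bad i j).card : ℝ) * (lam / 2 * (A j).card)
          = ∑ v ∈ Bad i j, (lam / 2 * (A j).card) := by rw [Finset.sum_const, nsmul_eq_mul]
        _ ≤ ∑ v ∈ Bad i j, ((W i j v).card : ℝ) :=
          Finset.sum_le_sum fun v hv => (Finset.mem_filter.1 hv).2.2.le
        _ ≤ ∑ v ∈ A i, ((W i j v).card : ℝ) :=
          Finset.sum_le_sum_of_subset_of_nonneg (Finset.filter_subset _ _)
            (fun _ _ _ => Nat.cast_nonneg _)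
    have hj : (0 : ℝ) < (A j).card := by exact_mod_cast hA0 j
    have hpos : 0 < lam / 2 * (A j).card := by positivity
    refine le_of_mul_le_mul_right (h1.trans (le_of_eq ?_)) hpos
    field_simp
    ring
  have hsize : ∀ i, ((A i).card : ℝ) ≤ 2 * (A i \ Finset.univ.biUnion (Bad i)).card := by
    intro i
    have h1 : ((Finset.univ.biUnion (Bad i)).card : ℝ) ≤ (A i).card / 2 := by
      calc ((Finset.univ.biUnion (Bad i)).card : ℝ) ≤ ∑ j : Fin K, ((Bad i j).card : ℝ) := by
            exact_mod_cast Finset.card_biUnion_le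
        _ ≤ ∑ j : Fin K, ((A i).card / (2 * (K + 1)) : ℝ) :=
          Finset.sum_le_sum fun j _ => hBad i j
        _ = (K / (K + 1)) * ((A i).card / 2) := by
          rw [Finset.sum_const, nsmul_eq_mul, Finset.card_univ, Fintype.card_fin]
          field_simp
        _ ≤ 1 * ((A i).card / 2) := by
          gcongr
          rw [div_le_one (by positivity)]
          linarith
        _ = (A i).card / 2 := one_mul _
    have h2 : ((A i).card : ℝ) ≤ (A i \ Finset.univ.biUnion (Bad i)).card +
        (Finset.univ.biUnion (Bad i)).card := by
      exact_mod_cast Finset.card_le_card_sdiff_add_card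
    linarith
  refine ⟨fun i => A i \ Finset.univ.biUnion (Bad i), hsize, ?_⟩
  · intro i j hij v hv
    have h2 := hsize j
    rw [Finset.mem_sdiff] at hv
    have h3 : ((W i j v).card : ℝ) ≤ lam / 2 * (A j).card := by
      by_contra! hlt
      exact hv.2 (Finset.mem_biUnion.2 ⟨j, Finset.mem_univ _,
        Finset.mem_filter.2 ⟨hv.1, hij, hlt⟩⟩)
    have h4 : (((A j \ Finset.univ.biUnion (Bad j)).filter
        (fun w => ¬ T.Fwd i j v w)).card : ℝ) ≤ (W i j v).card := by
      exact_mod_cast Finset.card_le_card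
        (Finset.filter_subset_filter _ Finset.sdiff_subset)
    nlinarith

/-! ### Finding a star -/

/-- Every set of `2 ^ k` vertices contains a transitive subtournament on `k` vertices, indexed
here by a prescribed set `L` of `k` elements of a linear order. -/
lemma exists_transitive {n m : ℕ} (T : Tournament n) (k : ℕ) (L : Finset (Fin m))
    (hL : L.card = k) (X : Finset (Fin n)) (hX : 2 ^ k ≤ X.card) :
    ∃ g : Fin m → Fin n, (∀ x ∈ L, g x ∈ X) ∧
      ∀ x ∈ L, ∀ y ∈ L, x < y → T.arc (g x) (g y) = true := by
  induction k generalizing L X with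
  | zero =>
    rw [Finset.card_eq_zero] at hL
    obtain ⟨v, hv⟩ := Finset.card_pos.1 (lt_of_lt_of_le (by simp) hX)
    subst hL
    exact ⟨fun _ => v, by simp, by simp⟩
  | succ k ih =>
    obtain ⟨v, hv⟩ := Finset.card_pos.1 (lt_of_lt_of_le (by positivity) hX)
    have hLne : L.Nonempty := Finset.card_pos.1 (by omega)
    have hsplit : X.card ≤ (X.filter (fun w => T.arc v w = true)).card +
        ((X.filter (fun w => T.arc w v = true)).card + 1) := by
      rw [← Finset.card_filter_add_card_filter_not (s := X) (fun w => T.arc v w = true)]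
      exact Nat.add_le_add_left (T.card_not_arc_le v X) _
    rw [pow_succ] at hX
    rcases (by omega : 2 ^ k ≤ (X.filter (fun w => T.arc v w = true)).card ∨
        2 ^ k ≤ (X.filter (fun w => T.arc w v = true)).card) with h | h
    · obtain ⟨g, hg, hga⟩ := ih (L.erase (L.min' hLne))
        (by rw [Finset.card_erase_of_mem (L.min'_mem _)]; omega) _ h
      refine ⟨Function.update g (L.min' hLne) v, ?_, ?_⟩
      · intro x hx
        by_cases hxm : x = L.min' hLne
        · rw [hxm]; simpa using hv
        · rw [Function.update_of_ne hxm]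
          exact (Finset.mem_filter.1 (hg x (Finset.mem_erase.2 ⟨hxm, hx⟩))).1
      · intro x hx y hy hxy
        have hym : y ≠ L.min' hLne := (lt_of_le_of_lt (L.min'_le x hx) hxy).ne'
        rw [Function.update_of_ne hym]
        by_cases hxm : x = L.min' hLne
        · rw [hxm, Function.update_self]
          exact (Finset.mem_filter.1 (hg y (Finset.mem_erase.2 ⟨hym, hy⟩))).2
        · rw [Function.update_of_ne hxm]
          exact hga x (Finset.mem_erase.2 ⟨hxm, hx⟩) y (Finset.mem_erase.2 ⟨hym, hy⟩) hxy
    · obtain ⟨g, hg, hga⟩ := ih (L.erase (L.max' hLne))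
        (by rw [Finset.card_erase_of_mem (L.max'_mem _)]; omega) _ h
      refine ⟨Function.update g (L.max' hLne) v, ?_, ?_⟩
      · intro x hx
        by_cases hxm : x = L.max' hLne
        · rw [hxm]; simpa using hv
        · rw [Function.update_of_ne hxm]
          exact (Finset.mem_filter.1 (hg x (Finset.mem_erase.2 ⟨hxm, hx⟩))).1
      · intro x hx y hy hxy
        have hxm : x ≠ L.max' hLne := (lt_of_lt_of_le hxy (L.le_max' y hy)).ne
        rw [Function.update_of_ne hxm]
        by_cases hym : y = L.max' hLne
        · rw [hym, Function.update_self]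
          exact (Finset.mem_filter.1 (hg x (Finset.mem_erase.2 ⟨hxm, hx⟩))).2
        · rw [Function.update_of_ne hym]
          exact hga x (Finset.mem_erase.2 ⟨hxm, hx⟩) y (Finset.mem_erase.2 ⟨hym, hy⟩) hxy

/-- Suppose that some pair of `Y × X` is in relation `R` whenever `Y` and `X` have sizes at least
`2 * a` and `a`. Then all but few elements have at least `N` neighbours in any set of size
`N * a`, as seen by cutting this set into `N` pieces of size `a`. -/
lemma card_few_le {n : ℕ} (R : Fin n → Fin n → Prop) [∀ v w, Decidable (R v w)] (a : ℕ)
    (hR : ∀ X Y : Finset (Fin n), a ≤ X.card → 2 * a ≤ Y.card → ∃ y ∈ Y, ∃ x ∈ X, R y x)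
    (N : ℕ) (X Y : Finset (Fin n)) (hX : N * a ≤ X.card) :
    (Y.filter (fun y => (X.filter (fun x => R y x)).card < N)).card ≤ 2 * N * a := by
  induction N generalizing X with
  | zero => simp
  | succ N ih =>
    obtain ⟨X₀, hX₀, hX₀c⟩ := Finset.exists_subset_card_eq
      (show a ≤ X.card by nlinarith)
    have h1 := ih (X \ X₀) (by
      rw [Finset.card_sdiff_of_subset hX₀, hX₀c]
      rw [Nat.succ_mul] at hX
      omega)
    have h2 : (Y.filter (fun y => ∀ x ∈ X₀, ¬ R y x)).card ≤ 2 * a := by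
      by_contra! hlt
      obtain ⟨y, hy, x, hx, hyx⟩ := hR X₀ _ hX₀c.ge hlt.le
      exact (Finset.mem_filter.1 hy).2 x hx hyx
    have h3 : Y.filter (fun y => (X.filter (fun x => R y x)).card < N + 1) ⊆
        Y.filter (fun y => ((X \ X₀).filter (fun x => R y x)).card < N) ∪
          Y.filter (fun y => ∀ x ∈ X₀, ¬ R y x) := by
      intro y hy
      rw [Finset.mem_filter] at hy
      rw [Finset.mem_union, Finset.mem_filter, Finset.mem_filter]
      by_contra! hcon
      obtain ⟨hc1, hc2⟩ := hcon
      have hc1 := hc1 hy.1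
      obtain ⟨x, hx, hyx⟩ := hc2 hy.1
      have hss : (X \ X₀).filter (fun x => R y x) ⊂ X.filter (fun x => R y x) := by
        refine Finset.ssubset_iff_subset_ne.2
          ⟨Finset.filter_subset_filter _ Finset.sdiff_subset, fun he => ?_⟩
        have : x ∈ (X \ X₀).filter (fun x => R y x) :=
          he ▸ Finset.mem_filter.2 ⟨hX₀ hx, hyx⟩
        exact (Finset.mem_sdiff.1 (Finset.mem_filter.1 this).1).2 hx
      have := Finset.card_lt_card hss
      omega
    have h4 := (Finset.card_le_card h3).trans (Finset.card_union_le _ _)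
    nlinarith

/-- If there is no pure pair of order `a`, then there are arcs in both directions between any two
sets of sizes at least `a` and `2 * a`; the order of `i` and `j` selects the direction. One set is
larger to allow for an overlap. -/
lemma exists_fwd {n K : ℕ} (T : Tournament n) (a : ℕ)
    (hT : ∀ A B, T.IsPurePair A B → min A.card B.card < a) (i j : Fin K)
    (X Y : Finset (Fin n)) (hX : a ≤ X.card) (hY : 2 * a ≤ Y.card) :
    ∃ y ∈ Y, ∃ x ∈ X, T.Fwd i j y x := by
  obtain ⟨X₀, hX₀, hX₀c⟩ := Finset.exists_subset_card_eq hX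
  have hY₀ : a ≤ (Y \ X₀).card := by
    have := Finset.le_card_sdiff X₀ Y
    omega
  by_contra! hcon
  have hd : Disjoint (Y \ X₀) X₀ := Finset.sdiff_disjoint
  have hne : ∀ y ∈ Y \ X₀, ∀ x ∈ X₀, y ≠ x := fun y hy x hx =>
    Finset.disjoint_iff_ne.1 hd y hy x hx
  by_cases hij : i < j
  · have := hT X₀ (Y \ X₀) ⟨hd.symm, fun x hx y hy => by
      have := hcon y (Finset.mem_sdiff.1 hy).1 x (hX₀ hx)
      simp only [Fwd, hij, if_true] at this
      exact T.arc_of_not (hne y hy x hx) this⟩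
    rw [hX₀c] at this
    omega
  · have := hT (Y \ X₀) X₀ ⟨hd, fun y hy x hx => by
      have := hcon y (Finset.mem_sdiff.1 hy).1 x (hX₀ hx)
      simp only [Fwd, hij, if_false] at this
      exact T.arc_of_not (hne y hy x hx).symm this⟩
    rw [hX₀c] at this
    omega

/-! ### Embedding the path-galaxy star by star -/

/-- `f` embeds the subtournament of `H` induced on `W` into `T`, sending each vertex `x` to the
set `B (s x)`. -/
def Emb {n m : ℕ} (T : Tournament n) (H : Tournament m) (B : Fin m → Finset (Fin n))
    (s : Fin m → Fin m) (W : Finset (Fin m)) (f : Fin m → Fin n) : Prop :=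
  (∀ x ∈ W, f x ∈ B (s x)) ∧
    ∀ x ∈ W, ∀ y ∈ W, H.arc x y = true → T.arc (f x) (f y) = true

/-- The vertices of `B j` joined by forward arcs to all the images `f z`, `z ∈ W`. -/
def cand {n m : ℕ} (T : Tournament n) (B : Fin m → Finset (Fin n)) (s : Fin m → Fin m)
    (W : Finset (Fin m)) (f : Fin m → Fin n) (j : Fin m) : Finset (Fin n) :=
  (B j).filter (fun w => ∀ z ∈ W, T.Fwd (s z) j (f z) w)

lemma card_cand {n m : ℕ} (T : Tournament n) (B : Fin m → Finset (Fin n))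
    (hB : ∀ i j, i ≠ j → ∀ v ∈ B i,
      (((B j).filter (fun w => ¬ T.Fwd i j v w)).card : ℝ) ≤ 1 / (2 * (m + 1)) * (B j).card)
    (s : Fin m → Fin m) (W : Finset (Fin m)) (f : Fin m → Fin n)
    (hf : ∀ x ∈ W, f x ∈ B (s x)) (j : Fin m) (hj : ∀ z ∈ W, s z ≠ j) :
    ((B j).card : ℝ) ≤ 2 * (T.cand B s W f j).card := by
  have h1 : B j ⊆ T.cand B s W f j ∪
      W.biUnion (fun z => (B j).filter (fun w => ¬ T.Fwd (s z) j (f z) w)) := by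
    intro w hw
    by_cases h : ∀ z ∈ W, T.Fwd (s z) j (f z) w
    · exact Finset.mem_union_left _ (Finset.mem_filter.2 ⟨hw, h⟩)
    · push Not at h
      obtain ⟨z, hz, hzw⟩ := h
      exact Finset.mem_union_right _ (Finset.mem_biUnion.2 ⟨z, hz, Finset.mem_filter.2 ⟨hw, hzw⟩⟩)
  have h2 : ((W.biUnion (fun z => (B j).filter (fun w => ¬ T.Fwd (s z) j (f z) w))).card : ℝ) ≤
      (B j).card / 2 := by
    have hW : (W.card : ℝ) ≤ m := by
      exact_mod_cast (Finset.card_le_univ W).trans_eq (Fintype.card_fin m)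
    calc ((W.biUnion (fun z => (B j).filter (fun w => ¬ T.Fwd (s z) j (f z) w))).card : ℝ)
        ≤ ∑ z ∈ W, (((B j).filter (fun w => ¬ T.Fwd (s z) j (f z) w)).card : ℝ) := by
          exact_mod_cast Finset.card_biUnion_le
      _ ≤ ∑ z ∈ W, 1 / (2 * ((m : ℝ) + 1)) * (B j).card :=
          Finset.sum_le_sum fun z hz => hB _ _ (hj z hz) _ (hf z hz)
      _ = W.card / (m + 1) * ((B j).card / 2) := by
          rw [Finset.sum_const, nsmul_eq_mul]
          field_simp
      _ ≤ 1 * ((B j).card / 2) := by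
          gcongr
          rw [div_le_one (by positivity)]
          linarith
      _ = (B j).card / 2 := one_mul _
  have h3 : ((B j).card : ℝ) ≤ (T.cand B s W f j).card +
      (W.biUnion (fun z => (B j).filter (fun w => ¬ T.Fwd (s z) j (f z) w))).card := by
    exact_mod_cast (Finset.card_le_card h1).trans (Finset.card_union_le _ _)
  linarith

/-- Partial embeddings of `W` and of `U` can be merged if all arcs of `H` between `W` and `U` are
forward and the vertices of `U` are mapped to candidates with respect to `W`. -/
lemma Emb.union {n m : ℕ} {T : Tournament n} {H : Tournament m} {B : Fin m → Finset (Fin n)}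
    {s : Fin m → Fin m} (hs : Monotone s) {W U : Finset (Fin m)} {f g : Fin m → Fin n}
    (hf : T.Emb H B s W f)
    (hsWU : ∀ z ∈ W, ∀ u ∈ U, s z ≠ s u)
    (hWU : ∀ z ∈ W, ∀ u ∈ U, ¬ H.Back z u ∧ ¬ H.Back u z)
    (hg : ∀ u ∈ U, g u ∈ T.cand B s W f (s u))
    (hga : ∀ x ∈ U, ∀ y ∈ U, H.arc x y = true → T.arc (g x) (g y) = true) :
    ∃ f', T.Emb H B s (W ∪ U) f' := by
  refine ⟨fun x => if x ∈ W then f x else g x, ?_, ?_⟩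
  · intro x hx
    by_cases hxW : x ∈ W
    · simpa [hxW] using hf.1 x hxW
    · have hxU : x ∈ U := (Finset.mem_union.1 hx).resolve_left hxW
      simpa [hxW] using (Finset.mem_filter.1 (hg x hxU)).1
  · intro x hx y hy hxy
    by_cases hxW : x ∈ W <;> by_cases hyW : y ∈ W
    · simpa [hxW, hyW] using hf.2 x hxW y hyW hxy
    · have hyU : y ∈ U := (Finset.mem_union.1 hy).resolve_left hyW
      have hlt : x < y := by
        refine lt_of_le_of_ne (not_lt.1 fun h => (hWU x hxW y hyU).1 ⟨h, hxy⟩) ?_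
        exact H.ne_of_arc hxy
      have hslt : s x < s y := lt_of_le_of_ne (hs hlt.le) (hsWU x hxW y hyU)
      have := (Finset.mem_filter.1 (hg y hyU)).2 x hxW
      simpa [hxW, hyW, Fwd, hslt] using this
    · have hxU : x ∈ U := (Finset.mem_union.1 hx).resolve_left hxW
      have hlt : x < y := by
        refine lt_of_le_of_ne (not_lt.1 fun h => (hWU y hyW x hxU).2 ⟨h, hxy⟩) ?_
        exact H.ne_of_arc hxy
      have hslt : ¬ s y < s x := not_lt.2 (hs hlt.le)
      have := (Finset.mem_filter.1 (hg x hxU)).2 y hyW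
      simpa [hxW, hyW, Fwd, hslt] using this
    · have hxU : x ∈ U := (Finset.mem_union.1 hx).resolve_left hxW
      have hyU : y ∈ U := (Finset.mem_union.1 hy).resolve_left hyW
      simpa [hxW, hyW] using hga x hxU y hyU hxy

/-- A vertex outside all stars can be added to a partial embedding. -/
lemma Emb.add_single {n m : ℕ} {T : Tournament n} {H : Tournament m}
    {B : Fin m → Finset (Fin n)} {s : Fin m → Fin m} (hs : Monotone s) {W : Finset (Fin m)}
    {f : Fin m → Fin n} (hf : T.Emb H B s W f) (c : Fin m)
    (hsc : ∀ z ∈ W, s z ≠ s c) (hWc : ∀ z ∈ W, ¬ H.Back z c ∧ ¬ H.Back c z)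
    (hcand : 0 < (T.cand B s W f (s c)).card) :
    ∃ f', T.Emb H B s (W ∪ {c}) f' := by
  obtain ⟨v, hv⟩ := Finset.card_pos.1 hcand
  refine hf.union hs (U := {c}) (g := fun _ => v) ?_ ?_ ?_ ?_
  · simpa using hsc
  · simpa using hWc
  · simpa using hv
  · simp [H.irrefl]

/-- A star with at least one leaf can be added to a partial embedding: a candidate for the center
with at least `2 ^ m` backward neighbours among the candidates for the leaves exists because there
are no large pure pairs, and these neighbours contain a transitive subtournament which serves as
the set of leaves. -/
lemma Emb.add_star {n m : ℕ} {T : Tournament n} {H : Tournament m}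
    {B : Fin m → Finset (Fin n)} {s : Fin m → Fin m} (hs : Monotone s) {W : Finset (Fin m)}
    {f : Fin m → Fin n} (hf : T.Emb H B s W f) (a : ℕ)
    (hT : ∀ A B, T.IsPurePair A B → min A.card B.card < a)
    (c b : Fin m) (L : Finset (Fin m)) (hLb : ∀ y ∈ L, s y = b) (hcb : s c ≠ b)
    (hL : ∀ x ∈ L, ∀ y ∈ L, H.arc x y = true → x < y)
    (hcL : ∀ y ∈ L, H.Back c y ∨ H.Back y c)
    (hsWU : ∀ z ∈ W, ∀ u ∈ insert c L, s z ≠ s u)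
    (hWU : ∀ z ∈ W, ∀ u ∈ insert c L, ¬ H.Back z u ∧ ¬ H.Back u z)
    (hcand : ∀ u ∈ insert c L, 2 * 2 ^ m * a < (T.cand B s W f (s u)).card)
    (hLne : L.Nonempty) :
    ∃ f', T.Emb H B s (W ∪ insert c L) f' := by
  obtain ⟨y₀, hy₀⟩ := hLne
  have hcb' := hcand y₀ (Finset.mem_insert_of_mem hy₀)
  rw [hLb y₀ hy₀] at hcb'
  have hcc := hcand c (Finset.mem_insert_self _ _)
  have hfew := card_few_le (fun v w => T.Fwd b (s c) v w) a
    (fun X Y => exists_fwd T a hT b (s c) X Y) (2 ^ m)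
    (T.cand B s W f b) (T.cand B s W f (s c)) (by nlinarith)
  obtain ⟨v, hv, hvN⟩ : ∃ v ∈ T.cand B s W f (s c),
      2 ^ m ≤ ((T.cand B s W f b).filter (fun w => T.Fwd b (s c) v w)).card := by
    by_contra! hcon
    rw [Finset.filter_true_of_mem hcon] at hfew
    omega
  have hLm : L.card ≤ m := (Finset.card_le_univ L).trans_eq (Fintype.card_fin m)
  obtain ⟨g, hg, hga⟩ := exists_transitive T L.card L rfl _
    ((Nat.pow_le_pow_right two_pos hLm).trans hvN)
  have hcnL : c ∉ L := fun h => hcb (hLb c h)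
  have hne : ∀ x ∈ L, x ≠ c := fun x hx h => hcnL (h ▸ hx)
  refine hf.union hs (U := insert c L) (g := Function.update g c v) hsWU hWU ?_ ?_
  · intro u hu
    rcases Finset.mem_insert.1 hu with rfl | hu
    · simpa using hv
    · rw [Function.update_of_ne (hne u hu), hLb u hu]
      exact (Finset.mem_filter.1 (hg u hu)).1
  · intro x hx y hy hxy
    rcases Finset.mem_insert.1 hx with rfl | hxL <;> rcases Finset.mem_insert.1 hy with rfl | hyL
    · simp [H.irrefl] at hxy
    · rw [Function.update_self, Function.update_of_ne (hne y hyL)]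
      have hlt : y < x := by
        rcases hcL y hyL with h | h
        · exact h.1
        · exact absurd h.2 (H.not_arc_of_arc hxy)
      have hslt : b < s x := by
        have := hs hlt.le
        rw [hLb y hyL] at this
        exact lt_of_le_of_ne this hcb.symm
      have := (Finset.mem_filter.1 (hg y hyL)).2
      simpa [Fwd, hslt] using this
    · rw [Function.update_self, Function.update_of_ne (hne x hxL)]
      have hlt : y < x := by
        rcases hcL x hxL with h | h
        · exact absurd h.2 (H.not_arc_of_arc hxy)
        · exact h.1
      have hslt : ¬ b < s y := by
        have := hs hlt.le
        rw [hLb x hxL] at this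
        exact not_lt.2 this
      have := (Finset.mem_filter.1 (hg x hxL)).2
      simpa [Fwd, hslt] using this
    · rw [Function.update_of_ne (hne x hxL), Function.update_of_ne (hne y hyL)]
      exact hga x hxL y hyL (hL x hxL y hyL hxy)

/-- Disjoint convex sets `L i` can be collapsed to single points by a monotone map which
identifies nothing else. -/
lemma exists_collapse {m l : ℕ} (L : Fin l → Finset (Fin m))
    (hd : ∀ i j x, x ∈ L i → x ∈ L j → i = j)
    (hconv : ∀ i, ∀ u ∈ L i, ∀ w ∈ L i, ∀ v, u ≤ v → v ≤ w → v ∈ L i) :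
    ∃ s : Fin m → Fin m, Monotone s ∧ (∀ i, ∀ x ∈ L i, ∀ y ∈ L i, s x = s y) ∧
      ∀ x y, s x = s y → x = y ∨ ∃ i, x ∈ L i ∧ y ∈ L i := by
  classical
  let C : Fin m → Finset (Fin m) := fun x =>
    Finset.univ.filter (fun y => y = x ∨ ∃ i, x ∈ L i ∧ y ∈ L i)
  have hC : ∀ x, (C x).Nonempty := fun x => ⟨x, by simp [C]⟩
  let s : Fin m → Fin m := fun x => (C x).min' (hC x)
  have hle : ∀ x, s x ≤ x := fun x => Finset.min'_le _ _ (by simp [C])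
  have hmem : ∀ x, s x = x ∨ ∃ i, x ∈ L i ∧ s x ∈ L i := fun x =>
    (Finset.mem_filter.1 ((C x).min'_mem (hC x))).2
  have hconst : ∀ i, ∀ x ∈ L i, ∀ y ∈ L i, s x = s y := by
    intro i x hx y hy
    have : C x = C y := by
      ext z
      simp only [C, Finset.mem_filter, Finset.mem_univ, true_and]
      constructor
      · rintro (rfl | ⟨j, hj, hz⟩)
        · exact Or.inr ⟨i, hy, hx⟩
        · obtain rfl := hd _ _ _ hx hj
          exact Or.inr ⟨i, hy, hz⟩
      · rintro (rfl | ⟨j, hj, hz⟩)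
        · exact Or.inr ⟨i, hx, hy⟩
        · obtain rfl := hd _ _ _ hy hj
          exact Or.inr ⟨i, hx, hz⟩
    simp only [s, this]
  refine ⟨s, ?_, hconst, ?_⟩
  · intro x y hxy
    by_contra! hlt
    have hlt' : s y < x := lt_of_lt_of_le hlt (hle x)
    rcases hmem y with h | ⟨i, hy, hsy⟩
    · rw [h] at hlt'
      exact absurd hxy (not_le.2 hlt')
    · have := hconst i x (hconv i _ hsy _ hy x hlt'.le hxy) y hy
      exact absurd this hlt.ne'
  · intro x y hxy
    rcases hmem x with hx | ⟨i, hx, hsx⟩ <;> rcases hmem y with hy | ⟨j, hy, hsy⟩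
    · exact Or.inl (by rw [← hx, hxy, hy])
    · exact Or.inr ⟨j, by rw [← hx, hxy]; exact hsy, hy⟩
    · exact Or.inr ⟨i, hx, by rw [← hy, ← hxy]; exact hsx⟩
    · rw [hxy] at hsx
      obtain rfl := hd _ _ _ hsx hsy
      exact Or.inr ⟨i, hx, hy⟩

/-- A path-galaxy embeds into any tournament without large pure pairs that has a long enough
sequence of large sets with almost all arcs forward. -/
lemma exists_emb {n m : ℕ} (T : Tournament n) (H : Tournament m)
    (hH : H.IsPathGalaxyOn Finset.univ Finset.univ) (B : Fin m → Finset (Fin n)) (a : ℕ)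
    (hT : ∀ A B, T.IsPurePair A B → min A.card B.card < a)
    (hB : ∀ i j, i ≠ j → ∀ v ∈ B i,
      (((B j).filter (fun w => ¬ T.Fwd i j v w)).card : ℝ) ≤ 1 / (2 * (m + 1)) * (B j).card)
    (hBc : ∀ j, 2 * (2 * 2 ^ m * a) < (B j).card) : T.Contains H := by
  obtain ⟨l, S, ctr, X, -, -, hSd, hSX, hcov, hstar, hback, -, hconv⟩ := hH
  have hSd' : ∀ i j x, x ∈ S i → x ∈ S j → i = j := by
    intro i j x hi hj
    by_contra h
    exact Finset.disjoint_left.1 (hSd i j h) hi hj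
  obtain ⟨s, hs, hsc, hsi⟩ := exists_collapse (fun i => (S i).erase (ctr i))
    (fun i j x hi hj => hSd' i j x (Finset.mem_of_mem_erase hi) (Finset.mem_of_mem_erase hj))
    (fun i u hu w hw v => hconv i u hu w hw v (Finset.mem_univ _))
  have hcand : ∀ (W : Finset (Fin m)) (f : Fin m → Fin n), T.Emb H B s W f → ∀ j,
      (∀ z ∈ W, s z ≠ j) → 2 * 2 ^ m * a < (T.cand B s W f j).card := by
    intro W f hf j hj
    have h1 := card_cand T B hB s W f hf.1 j hj
    have h2 : (B j).card ≤ 2 * (T.cand B s W f j).card := by exact_mod_cast h1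
    have := hBc j
    omega
  have hstars : ∀ I : Finset (Fin l), ∃ f, T.Emb H B s (I.biUnion S) f := by
    intro I
    induction I using Finset.induction_on with
    | empty =>
      by_cases hm : Nonempty (Fin n)
      · exact ⟨fun _ => hm.some, by simp, by simp⟩
      · have hm0 : ∀ x : Fin m, False := by
          intro x
          have : 0 < (B x).card := lt_of_le_of_lt (Nat.zero_le _) (hBc x)
          obtain ⟨v, -⟩ := Finset.card_pos.1 this
          exact hm ⟨v⟩
        exact ⟨fun x => (hm0 x).elim, by simp, by simp⟩
    | insert i I hi ih =>
      obtain ⟨f, hf⟩ := ih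
      have hWS : ∀ z ∈ I.biUnion S, z ∉ S i := by
        intro z hz hzi
        obtain ⟨j, hj, hzj⟩ := Finset.mem_biUnion.1 hz
        exact hi (hSd' _ _ _ hzi hzj ▸ hj)
      have hc : ctr i ∈ S i := by
        rcases hstar i with h | h <;> exact h.1
      have hins : insert (ctr i) ((S i).erase (ctr i)) = S i := Finset.insert_erase hc
      have hss : ∀ z ∈ I.biUnion S, ∀ u ∈ S i, s z ≠ s u := by
        intro z hz u hu he
        rcases hsi z u he with rfl | ⟨j, hzj, huj⟩
        · exact hWS z hz hu
        · obtain rfl := hSd' _ _ _ hu (Finset.mem_of_mem_erase huj)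
          exact hWS z hz (Finset.mem_of_mem_erase hzj)
      have hWU : ∀ z ∈ I.biUnion S, ∀ u ∈ S i, ¬ H.Back z u ∧ ¬ H.Back u z := by
        intro z hz u hu
        constructor <;> intro hb
        · obtain ⟨j, hzj, huj⟩ := hback _ (Finset.mem_univ _) _ (Finset.mem_univ _) hb
          obtain rfl := hSd' _ _ _ hu huj
          exact hWS z hz hzj
        · obtain ⟨j, huj, hzj⟩ := hback _ (Finset.mem_univ _) _ (Finset.mem_univ _) hb
          obtain rfl := hSd' _ _ _ hu huj
          exact hWS z hz hzj
      have hcd : ∀ u ∈ S i, 2 * 2 ^ m * a < (T.cand B s (I.biUnion S) f (s u)).card :=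
        fun u hu => hcand _ f hf _ (fun z hz => hss z hz u hu)
      rw [Finset.biUnion_insert, Finset.union_comm, ← hins]
      rcases ((S i).erase (ctr i)).eq_empty_or_nonempty with hL | hL
      · rw [hL]
        exact hf.add_single hs (ctr i) (fun z hz => hss z hz _ hc) (fun z hz => hWU z hz _ hc)
          (lt_of_le_of_lt (Nat.zero_le _) (hcd _ hc))
      · obtain ⟨y₀, hy₀⟩ := id hL
        refine hf.add_star hs a hT (ctr i) (s y₀) _ (fun y hy => hsc i y hy y₀ hy₀) ?_ ?_ ?_
          (by rwa [hins]) (by rwa [hins]) (by rwa [hins]) hL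
        · intro he
          rcases hsi _ _ he with h | ⟨j, hj, -⟩
          · exact (Finset.mem_erase.1 hy₀).1 h.symm
          · obtain rfl := hSd' _ _ _ hc (Finset.mem_of_mem_erase hj)
            simp at hj
        · intro x hx y hy hxy
          rw [Finset.mem_erase] at hx hy
          refine lt_of_le_of_ne (not_lt.1 fun hlt => ?_) (H.ne_of_arc hxy)
          rcases hstar i with ⟨-, -, h⟩ | ⟨-, -, h⟩
          · exact hy.1 ((h x hx.2 y hy.2).1 ⟨hlt, hxy⟩).1
          · exact hx.1 ((h x hx.2 y hy.2).1 ⟨hlt, hxy⟩).1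
        · intro y hy
          rw [Finset.mem_erase] at hy
          rcases hstar i with ⟨-, -, h⟩ | ⟨-, -, h⟩
          · exact Or.inr ((h y hy.2 _ hc).2 ⟨rfl, hy.1⟩)
          · exact Or.inl ((h _ hc y hy.2).2 ⟨rfl, hy.1⟩)
  have hall : ∀ Y : Finset (Fin m), Y ⊆ X → ∃ f, T.Emb H B s (Finset.univ.biUnion S ∪ Y) f := by
    intro Y
    induction Y using Finset.induction_on with
    | empty => intro _; simpa using hstars Finset.univ
    | insert c Y hc ih =>
      intro hYX
      obtain ⟨f, hf⟩ := ih ((Finset.subset_insert _ _).trans hYX)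
      have hcX : c ∈ X := hYX (Finset.mem_insert_self _ _)
      have hcS : ∀ i, c ∉ S i := fun i h => Finset.disjoint_left.1 (hSX i) h hcX
      have hcW : c ∉ Finset.univ.biUnion S ∪ Y := by
        simp [hcS, hc]
      have hss : ∀ z ∈ Finset.univ.biUnion S ∪ Y, s z ≠ s c := by
        intro z hz he
        rcases hsi z c he with rfl | ⟨j, -, hj⟩
        · exact hcW hz
        · exact hcS j (Finset.mem_of_mem_erase hj)
      have := hf.add_single hs c hss (by
        intro z hz
        constructor <;> intro hb
        · obtain ⟨j, -, hj⟩ := hback _ (Finset.mem_univ _) _ (Finset.mem_univ _) hb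
          exact hcS j hj
        · obtain ⟨j, hj, -⟩ := hback _ (Finset.mem_univ _) _ (Finset.mem_univ _) hb
          exact hcS j hj)
        (lt_of_le_of_lt (Nat.zero_le _) (hcand _ f hf _ hss))
      rwa [Finset.insert_eq, Finset.union_comm {c} Y, ← Finset.union_assoc]
  obtain ⟨f, hf⟩ := hall X (Finset.Subset.refl _)
  have huniv : ∀ x, x ∈ Finset.univ.biUnion S ∪ X := by
    intro x
    rcases hcov x (Finset.mem_univ _) with h | ⟨i, h⟩
    · exact Finset.mem_union_right _ h
    · exact Finset.mem_union_left _ (Finset.mem_biUnion.2 ⟨i, Finset.mem_univ _, h⟩)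
  exact contains_of_hom T H f fun x y => hf.2 x (huniv x) y (huniv y)

lemma contains_of_relabel {n m : ℕ} (T : Tournament n) (H : Tournament m) (θ : Fin m ≃ Fin m)
    (h : T.Contains (H.relabel θ)) : T.Contains H := by
  obtain ⟨f, hf⟩ := h
  refine contains_of_hom T H (fun x => f (θ.symm x)) fun x y hxy => hf _ _ ?_
  simpa [relabel] using hxy

end Tournament

/-- Every path-galaxy has the strong EH-property. -/
theorem pathGalaxy_strongEH {m : ℕ} (H : Tournament m) (hH : H.IsPathGalaxy) :
    H.StrongEH := by
  obtain ⟨θ, hθ⟩ := hH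
  have hlam : (0 : ℝ) < 1 / (2 * (m + 1)) := by positivity
  have hm0 : (0 : ℝ) ≤ m := Nat.cast_nonneg m
  obtain ⟨c, hc0, hc1, hc⟩ := Tournament.exists_seq (H.relabel θ)
    (1 / (2 * (m + 1)) / (4 * (m + 1))) (by positivity)
    (by
      rw [div_div, div_le_one (by positivity)]
      nlinarith) m
  refine ⟨c / (32 * 2 ^ m), by positivity, ?_⟩
  intro n T hfree hn
  set α : ℝ := c / (32 * 2 ^ m) with hα
  have hα0 : 0 < α := by positivity
  have hn0 : (0 : ℝ) < n := by exact_mod_cast (by omega : 0 < n)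
  by_cases hsmall : α * n ≤ 1
  · -- A single arc is a pure pair of order one.
    have hpair : ∃ u v : Fin n, T.arc u v = true := by
      let u : Fin n := ⟨0, by omega⟩
      let v : Fin n := ⟨1, hn⟩
      by_cases h : T.arc u v = true
      · exact ⟨u, v, h⟩
      · exact ⟨v, u, T.arc_of_not (by simp [u, v]) h⟩
    obtain ⟨u, v, huv⟩ := hpair
    refine ⟨{u}, {v}, ⟨by simpa using T.ne_of_arc huv, by simpa using huv⟩, ?_⟩
    simpa using hsmall
  · push Not at hsmall
    by_contra! hcon
    apply hfree
    apply Tournament.contains_of_relabel T H θ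
    by_contra hfree'
    have hcα : c = 32 * 2 ^ m * α := by rw [hα]; field_simp
    have h2m : (1 : ℝ) ≤ 2 ^ m := one_le_pow₀ one_le_two
    have hcn : c * n = 32 * 2 ^ m * (α * n) := by rw [hcα]; ring
    obtain ⟨A, -, hAc, hA⟩ := hc n T hfree' Finset.univ (by
      rw [Finset.card_univ, Fintype.card_fin, hcn]
      nlinarith)
    rw [Finset.card_univ, Fintype.card_fin] at hAc
    obtain ⟨B, hBA, hB⟩ := T.exists_typical _ hlam A (fun i => by
      have : (0 : ℝ) < (A i).card := lt_of_lt_of_le (by positivity) (hAc i)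
      exact_mod_cast this) hA
    refine hfree' (Tournament.exists_emb T _ hθ B ⌈α * n⌉₊ ?_ hB ?_)
    · intro X Y hXY
      exact_mod_cast lt_of_lt_of_le (hcon X Y hXY) (Nat.le_ceil _)
    · intro j
      have h1 : ((⌈α * n⌉₊ : ℕ) : ℝ) < 2 * (α * n) := by
        have := Nat.ceil_lt_add_one (show 0 ≤ α * n by positivity)
        linarith
      have h2 := hAc j
      have h3 := hBA j
      have h4 : (2 * (2 * 2 ^ m * (⌈α * n⌉₊ : ℕ)) : ℝ) < (B j).card := by
        have : (2 : ℝ) ^ m * (⌈α * n⌉₊ : ℕ) < 2 ^ m * (2 * (α * n)) :=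
          mul_lt_mul_of_pos_left h1 (by positivity)
        have h5 : (0 : ℝ) < 2 ^ m * (α * n) := by positivity
        linarith
      exact_mod_cast h4
end
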